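/- arXiv:2405.14387 — 2 statements merged into one kernel-verified Lean document; each statement's English description precedes it below -/
import Mathlib

section
/- Let N > 0 and set C = 10⁶(N+1). Let δ > 0 and κ ≥ δ, let G be a group acting by isometries and (κ,N)-acylindrically on a δ-hyperbolic geodesic metric space X. Let L > 10⁴·κ and let U ⊆ G be a finite symmetric subset with L(U) ≤ L such that the subgroup generated by U has unbounded orbits in X and is not virtually cyclic. Then there exist an integer n > C³, a subset S ⊆ U^{10⁷·n}, and p ∈ X such that: (1) S is 200δ-reduced at p; (2) |S| ≥ |U^n|/C²; (3) L(S,p) ≤ 10¹³·C³·L. In particular |S| > C and the natural homomorphism from the free group F(S) to G is injective, i.e. S freely generates a free subgroup of G. -/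
/-!
The idea is to raise `U` to a power at which its energy is large compared with `κ`, and then to
play ping-pong with conjugates of one well-chosen loxodromic element.

*Choice of scale.* Odd powers of a symmetric set increase, and they grow at least linearly since
the orbits are unbounded (`card_odd`). Their energies are unbounded (`exists_energy_gt`): by
acylindricity, a large set moving two points by a bounded amount forces these points to be close
(`card_le_countBound`), so bounded energies would give bounded orbits. The first odd power
`W = U ^ m` whose energy exceeds a threshold of order `C³L/(N+1)` has energy comparable with it
(`exists_scale`). Let `p` be an almost minimal point and `lam` the energy of `W` at `p`.

*A rank one element.* Some product `g` of two elements of `W` translates `p` along a quasi-geodesic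
(`exists_lox`). If every `t ∈ U` conjugated a fixed power of `g` to itself or to its inverse, the
group generated by `U` would be virtually cyclic (`virtuallyCyclic_of_normalizes`). For any other
`t`, acylindricity shows that the orbits of `g` and `t g t⁻¹` diverge within distance
`O((N+1) lam)` (`diverge`). Put `h = (g^M (t g t⁻¹)^M)^10` with `M` of order `N+1`. An element `s`
moving `p` by at most `O((N+1) lam)` and almost preserving the direction of `h` almost fixes the
segments of the path of `h` carried by powers of `g` and of `t g t⁻¹`, hence, up to conjugation,
commutes with powers of both; it is then elliptic and moves the deep points of such a segment by at
most `100δ`, so that acylindricity leaves at most `N` possibilities for `s` (`PingPair.count`).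

*Reduced set.* Two conjugates `v h v⁻¹`, `w h w⁻¹` with `v, w ∈ W ^ k`, `k` of order `N+1`, which
fail the inequality in the definition of a reduced set are said to be in conflict. If `w` and `w₀`
are both in conflict with `v`, in the same way, then `w₀⁻¹w` is one of these elements `s`. The graph of conflicts on `W ^ k` therefore has degree at most
`4(N+1)`, and an independent set of conjugates is the required `S` (`exists_reduced`). Finally a
reduced set freely generates, by the ping-pong lemma (`ReducedAt.injective`).
-/

open Pointwise Filter

noncomputable section

universe u v

/-- The Gromov product `(x,y)_t`. -/
def gromov {X : Type*} [MetricSpace X] (x y t : X) : ℝ :=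
  (dist x t + dist y t - dist x y) / 2

/-- `X` is `δ`-hyperbolic (four point inequality). -/
def IsDeltaHyperbolic (X : Type*) [MetricSpace X] (δ : ℝ) : Prop :=
  ∀ x y z t : X, min (gromov x y t) (gromov y z t) - δ ≤ gromov x z t

/-- `X` is a geodesic metric space: any two points are joined by an isometric
embedding of a closed real interval. -/
def IsGeodesicSpace (X : Type*) [MetricSpace X] : Prop :=
  ∀ x y : X, ∃ f : ℝ → X, f 0 = x ∧ f (dist x y) = y ∧
    ∀ s ∈ Set.Icc (0 : ℝ) (dist x y), ∀ t ∈ Set.Icc (0 : ℝ) (dist x y),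
      dist (f s) (f t) = |s - t|

/-- The action of `G` on `X` is by isometries. -/
def IsometricAction (G X : Type*) [Group G] [MetricSpace X] [MulAction G X] : Prop :=
  ∀ g : G, Isometry fun x : X => g • x

/-- The action of `G` on `X` is `(κ,N)`-acylindrical (relative to the
hyperbolicity constant `δ`). -/
def AcylindricalAction (G X : Type*) [Group G] [MetricSpace X] [MulAction G X]
    (δ κ N : ℝ) : Prop :=
  ∀ x y : X, κ ≤ dist x y →
    {g : G | dist (g • x) x ≤ 100 * δ ∧ dist (g • y) y ≤ 100 * δ}.Finite ∧
    ({g : G | dist (g • x) x ≤ 100 * δ ∧ dist (g • y) y ≤ 100 * δ}.ncard : ℝ) ≤ N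

/-- `L(U,x)`, the `ℓ^∞`-energy of `U` at `x`. -/
def energyAt {G X : Type*} [Group G] [MetricSpace X] [MulAction G X]
    (U : Set G) (x : X) : ℝ :=
  sSup ((fun u : G => dist (u • x) x) '' U)

/-- `L(U)`, the `ℓ^∞`-energy of `U`. -/
def energy {G : Type*} (X : Type*) [Group G] [MetricSpace X] [MulAction G X]
    (U : Set G) : ℝ :=
  sInf (Set.range fun x : X => energyAt U x)

/-- The stable translation length `‖g‖^∞`, computed at the point `x` (for an
isometric action, by Fekete's subadditive lemma this infimum equals the limit of
`d(gⁿx,x)/n` and is independent of `x`). -/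
def stableLength {G X : Type*} [Group G] [MetricSpace X] [MulAction G X]
    (g : G) (x : X) : ℝ :=
  ⨅ n : ℕ+, dist ((g ^ (n : ℕ)) • x) x / ((n : ℕ) : ℝ)

/-- `g` is loxodromic for the action on `X`. -/
def IsLoxodromic {G : Type*} (X : Type*) [Group G] [MetricSpace X] [MulAction G X]
    (g : G) : Prop :=
  ∀ x : X, 0 < stableLength g x

/-- The translation length `‖g‖`. -/
def translationLength {G : Type*} (X : Type*) [Group G] [MetricSpace X] [MulAction G X]
    (g : G) : ℝ :=
  sInf (Set.range fun x : X => dist (g • x) x)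

/-- The axis of `g`. -/
def axisOf {G X : Type*} [Group G] [MetricSpace X] [MulAction G X]
    (δ : ℝ) (g : G) : Set X :=
  {x : X | dist (g • x) x ≤ translationLength X g + 8 * δ}

/-- The exponential growth rate `ω(U) = limsup (1/n) log |Uⁿ|`. -/
def growthRate {G : Type*} [Group G] (U : Set G) : ℝ :=
  limsup (fun n : ℕ => Real.log ((U ^ n).ncard : ℝ) / (n : ℝ)) atTop

/-- `S` is `α`-reduced at `p`. -/
def ReducedAt {G X : Type*} [Group G] [MetricSpace X] [MulAction G X]
    (δ α : ℝ) (S : Set G) (p : X) : Prop :=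
  S ∩ S⁻¹ = ∅ ∧
  ∀ u₁ ∈ S ∪ S⁻¹, ∀ u₂ ∈ S ∪ S⁻¹, u₁ ≠ u₂ →
    gromov (u₁ • p) (u₂ • p) p <
      min (dist (u₁ • p) p) (dist (u₂ • p) p) / 2 - α - 50 * δ

/-- A group is virtually cyclic if it has a cyclic subgroup of finite index. -/
def VirtuallyCyclic (H : Type*) [Group H] : Prop :=
  ∃ K : Subgroup H, IsCyclic K ∧ K.FiniteIndex

/-- A group is virtually nilpotent if it has a nilpotent subgroup of finite index. -/
def VirtuallyNilpotent (H : Type*) [Group H] : Prop :=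
  ∃ K : Subgroup H, Group.IsNilpotent K ∧ K.FiniteIndex

/-- An `L`-local `(1,δ)`-quasi-geodesic line. -/
def IsLocalQuasiGeodesic {X : Type*} [MetricSpace X] (L δ : ℝ) (γ : ℝ → X) : Prop :=
  ∀ s t : ℝ, |s - t| ≤ L → dist (γ s) (γ t) ≤ |s - t| ∧ |s - t| ≤ dist (γ s) (γ t) + δ

/-- `Y` is `σ`-quasi-convex. -/
def SigmaQuasiConvex {X : Type*} [MetricSpace X] (σ : ℝ) (Y : Set X) : Prop :=
  ∀ x : X, ∀ y ∈ Y, ∀ y' ∈ Y, Metric.infDist x Y ≤ gromov y y' x + σ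

/-- `y` is a `δ`-projection of `x` on `Y`. -/
def IsDProj {X : Type*} [MetricSpace X] (δ : ℝ) (Y : Set X) (x y : X) : Prop :=
  y ∈ Y ∧ dist x y ≤ Metric.infDist x Y + δ

/-- `l` is a reduced word over `U ∪ U⁻¹`. -/
def IsWordOver {G : Type*} [Group G] (U : Set G) (l : List G) : Prop :=
  (∀ a ∈ l, a ∈ U ∪ U⁻¹) ∧ l.Chain' fun a b => b ≠ a⁻¹

/-- `l` is a `τ`-shortening word over `Y` (relative to `U` and `p`). -/
def IsShorteningWord {G X : Type*} [Group G] [MetricSpace X] [MulAction G X]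
    (δ τ : ℝ) (U : Set G) (p : X) (Y : Set X) (l : List G) : Prop :=
  l ≠ [] ∧ IsWordOver U l ∧
  ∃ y₀ y₁ : X, IsDProj δ Y p y₀ ∧ IsDProj δ Y (l.prod • p) y₁ ∧
    τ < dist y₀ y₁ ∧
    (∀ a ∈ l.head?, dist p y₀ ≤ dist (a • p) p / 2 - 200 * δ) ∧
    (∀ a ∈ l.getLast?, dist (l.prod • p) y₁ ≤ dist (a • p) p / 2 - 200 * δ)

/-- `l` is a `τ`-shortening-free word relative to the family `Ys`. -/
def ShorteningFreeWord {G X : Type*} [Group G] [MetricSpace X] [MulAction G X]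
    (δ τ : ℝ) (U : Set G) (p : X) (Ys : Set (Set X)) (l : List G) : Prop :=
  IsWordOver U l ∧
  ∀ Y ∈ Ys, ∀ l₀ l₁ l₂ : List G, l = l₀ ++ l₁ ++ l₂ → ¬ IsShorteningWord δ τ U p Y l₁

/-- The word length of an element of a free group. -/
def fgNorm {α : Type*} (w : FreeGroup α) : ℕ :=
  letI := Classical.decEq α
  w.toWord.length

/-- `w` is a prefix of `r` in the free group. -/
def FGPrefix {α : Type*} (w r : FreeGroup α) : Prop :=
  fgNorm r = fgNorm w + fgNorm (w⁻¹ * r)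

/-- `r'` is a cyclic permutation of `r`. -/
def IsCyclicPerm {α : Type*} (r r' : FreeGroup α) : Prop :=
  ∃ w v : FreeGroup α, r = w * v ∧ fgNorm r = fgNorm w + fgNorm v ∧
    r' = v * w ∧ fgNorm r' = fgNorm v + fgNorm w

/-- `q` is a piece of the set of relators `R`. -/
def IsPiece {α : Type*} (R : Set (FreeGroup α)) (q : FreeGroup α) : Prop :=
  q ≠ 1 ∧ ∃ r₁ ∈ R, ∃ r₂ ∈ R, r₁ ≠ r₂ ∧ FGPrefix q r₁ ∧ FGPrefix q r₂

/-- `ξ`-uniform uniform exponential growth: every finitely generated subgroup is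
either virtually nilpotent or has `ξ`-uniform exponential growth. -/
def UUEG (ξ : ℝ) (Q : Type*) [Group Q] : Prop :=
  ∀ H : Subgroup Q, H.FG →
    (VirtuallyNilpotent H ∨
      ∀ U : Set H, U.Finite → U⁻¹ = U → Subgroup.closure U = ⊤ → ξ < growthRate U)

/-! ### Gromov products and the four point inequality -/

section Geometry

variable {X : Type*} [MetricSpace X] {δ : ℝ}

lemma gromov_comm (x y t : X) : gromov x y t = gromov y x t := by
  unfold gromov; rw [dist_comm x y]; ring

lemma gromov_swap (x y t : X) : gromov x y t = dist x t - gromov t y x := by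
  unfold gromov; rw [dist_comm y t, dist_comm y x, dist_comm t x]; ring

lemma gromov_nonneg (x y t : X) : 0 ≤ gromov x y t := by
  unfold gromov; have := dist_triangle_right x y t; linarith

lemma gromov_le_left (x y t : X) : gromov x y t ≤ dist x t := by
  unfold gromov; have := dist_triangle y x t; rw [dist_comm y x] at this; linarith

lemma gromov_le_right (x y t : X) : gromov x y t ≤ dist y t := by
  rw [gromov_comm]; exact gromov_le_left y x t

lemma gromov_self_eq (x t : X) : gromov x x t = dist x t := by
  unfold gromov; rw [dist_self]; ring

lemma gromov_move_left (x x' y t : X) : gromov x y t ≤ gromov x' y t + dist x x' := by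
  unfold gromov
  have h1 := dist_triangle x x' t
  have h2 := dist_triangle x' x y
  rw [dist_comm x' x] at h2; linarith

lemma gromov_move_right (x y y' t : X) : gromov x y t ≤ gromov x y' t + dist y y' := by
  rw [gromov_comm x y, gromov_comm x y']; exact gromov_move_left y y' x t

lemma gromov_move_base (x y t t' : X) : gromov x y t ≤ gromov x y t' + dist t t' := by
  unfold gromov
  have h1 := dist_triangle_right x t t'
  have h2 := dist_triangle_right y t t'
  have h3 := dist_triangle x t' t
  have h4 := dist_triangle y t' t
  rw [dist_comm t' t] at h3 h4; linarith

lemma hyp_or (hh : IsDeltaHyperbolic X δ) (x y z t : X) :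
    gromov x y t ≤ gromov x z t + δ ∨ gromov y z t ≤ gromov x z t + δ := by
  have h := hh x y z t
  rcases min_choice (gromov x y t) (gromov y z t) with h' | h' <;> rw [h'] at h
  · left; linarith
  · right; linarith

lemma four_or (hh : IsDeltaHyperbolic X δ) (x y z t : X) :
    dist x y + dist z t ≤ dist x z + dist y t + 2 * δ ∨
      dist x y + dist z t ≤ dist x t + dist y z + 2 * δ := by
  rcases hyp_or hh x z y t with h | h <;> unfold gromov at h
  · left; linarith
  · right; rw [dist_comm z y] at h; linarith

/-- Two points close to a geodesic `[P,Q]` are as far apart as their distances to `P` tell. -/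
lemma coord_dist (hh : IsDeltaHyperbolic X δ) {P Q z w : X} {e : ℝ}
    (hz : gromov P Q z ≤ e) (hw : gromov P Q w ≤ e) :
    dist z w ≤ |dist P z - dist P w| + 2 * e + 2 * δ := by
  unfold gromov at hz hw
  have h1 := le_abs_self (dist P z - dist P w)
  have h2 := neg_abs_le (dist P z - dist P w)
  rcases four_or hh z w P Q with h | h
  · rw [dist_comm z P, dist_comm w Q] at h; rw [dist_comm Q w] at *; linarith [dist_comm Q w]
  · rw [dist_comm w P] at h; linarith [dist_comm Q z]

/-- A point near `[P',Q']`, far from its ends, stays near the segment when the ends are moved. -/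
lemma mid_move (hh : IsDeltaHyperbolic X δ) {P Q P' Q' z : X} {e D : ℝ}
    (h : gromov P' Q' z ≤ e) (hP : dist P P' ≤ D) (hQ : dist Q Q' ≤ D)
    (hPz : D + e + 2 * δ < dist P z) (hQz : D + e + 2 * δ < dist Q z) (hδ : 0 ≤ δ) :
    gromov P Q z ≤ e + 2 * δ := by
  have a1 : dist P z - D ≤ gromov P' P z := by
    unfold gromov; have := dist_triangle P P' z; rw [dist_comm P' P]; linarith
  have a2 : dist Q z - D ≤ gromov Q Q' z := by
    unfold gromov; have := dist_triangle Q Q' z; linarith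
  rcases hyp_or hh P' P Q' z with h1 | h1
  · linarith
  · rcases hyp_or hh P Q Q' z with h2 | h2 <;> linarith

/-- Difference of distances to two nearby points `P, P'` hardly depends on the far away point
at which it is evaluated (an approximate Busemann cocycle). -/
lemma busemann (hh : IsDeltaHyperbolic X δ) {P P' z w : X} {D E : ℝ}
    (hP : dist P P' ≤ D) (hzw : dist z w ≤ E) (hfar : D + E + δ < dist P z) :
    dist P z + dist P' w ≤ dist P w + dist P' z + 2 * δ := by
  rcases four_or hh P z P' w with h | h
  · have h1 := dist_triangle P P' w
    have h2 := dist_triangle_right P z w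
    linarith
  · linarith [dist_comm z P']

end Geometry

section Action

variable {G X : Type*} [Group G] [MetricSpace X] [MulAction G X] {δ : ℝ}

lemma dist_act (hi : IsometricAction G X) (g : G) (x y : X) :
    dist (g • x) (g • y) = dist x y := (hi g).dist_eq x y

lemma gromov_act (hi : IsometricAction G X) (g : G) (x y t : X) :
    gromov (g • x) (g • y) (g • t) = gromov x y t := by
  simp only [gromov, dist_act hi]

lemma dist_act_inv (hi : IsometricAction G X) (g : G) (x y : X) :
    dist (g⁻¹ • x) y = dist x (g • y) := by
  rw [← dist_act hi g, smul_inv_smul]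

lemma disp_inv (hi : IsometricAction G X) (g : G) (x : X) :
    dist (g⁻¹ • x) x = dist (g • x) x := by
  rw [dist_act_inv hi, dist_comm]

lemma disp_mul (hi : IsometricAction G X) (g h : G) (x : X) :
    dist ((g * h) • x) x ≤ dist (g • x) x + dist (h • x) x := by
  have := dist_triangle ((g * h) • x) (g • x) x
  rw [mul_smul, dist_act hi] at this
  rw [mul_smul]; linarith

lemma disp_pow (hi : IsometricAction G X) (g : G) (x : X) (n : ℕ) :
    dist ((g ^ n) • x) x ≤ n * dist (g • x) x := by
  induction n with
  | zero => simp
  | succ n ih => rw [pow_succ]; have := disp_mul hi (g ^ n) g x; push_cast; linarith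

lemma disp_base (hi : IsometricAction G X) (g : G) (x y : X) :
    dist (g • x) x ≤ dist (g • y) y + 2 * dist x y := by
  have := dist_triangle4 (g • x) (g • y) y x
  rw [dist_act hi, dist_comm y x] at this; linarith

lemma disp_conj (hi : IsometricAction G X) (t g : G) (x : X) :
    dist ((t * g * t⁻¹) • x) x = dist (g • (t⁻¹ • x)) (t⁻¹ • x) := by
  rw [← dist_act hi t (g • (t⁻¹ • x)), smul_inv_smul, mul_smul, mul_smul]

/-- If `s` moves both ends of `[P,Q]` by at most `D`, it keeps the deep points of `[P,Q]` close to
`[P,Q]` and moves them by at most about `D`. -/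
lemma mid_act (hh : IsDeltaHyperbolic X δ) (hδ : 0 ≤ δ) (hi : IsometricAction G X)
    {P Q z : X} {s : G} {D : ℝ} (hP : dist (s • P) P ≤ D) (hQ : dist (s • Q) Q ≤ D)
    (hz : gromov P Q z ≤ 0) (hPz : 2 * D + 2 * δ < dist P z) (hQz : 2 * D + 2 * δ < dist Q z) :
    gromov P Q (s • z) ≤ 2 * δ ∧ dist z (s • z) ≤ D + 6 * δ := by
  have e1 : dist (s • P) (s • z) = dist P z := dist_act hi _ _ _
  have e2 : dist (s • Q) (s • z) = dist Q z := dist_act hi _ _ _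
  have t1 := dist_triangle (s • P) P (s • z)
  have t2 := dist_triangle (s • Q) Q (s • z)
  have t3 := dist_triangle_left P (s • z) (s • P)
  have hm : gromov P Q (s • z) ≤ 0 + 2 * δ := by
    refine mid_move hh (P' := s • P) (Q' := s • Q) (D := D) ?_ ?_ ?_ ?_ ?_ hδ
    · rw [gromov_act hi]; exact hz
    · rw [dist_comm]; exact hP
    · rw [dist_comm]; exact hQ
    · linarith
    · linarith
  refine ⟨by linarith, ?_⟩
  have hc := coord_dist hh (P := P) (Q := Q) (z := z) (w := s • z) (e := 2 * δ)
    (by linarith) (by linarith)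
  have : |dist P z - dist P (s • z)| ≤ D := by rw [abs_le]; constructor <;> linarith
  linarith

/-- The version of `mid_act` for points that are only roughly on `[P,Q]`, with no depth condition. -/
lemma rough_act (hh : IsDeltaHyperbolic X δ) (hi : IsometricAction G X)
    {P Q z : X} {s : G} {D e : ℝ} (hP : dist (s • P) P ≤ D) (hQ : dist (s • Q) Q ≤ D)
    (hz : gromov P Q z ≤ e) :
    dist (s • z) z ≤ 5 * D + 2 * e + 2 * δ := by
  have hD : 0 ≤ D := dist_nonneg.trans hP
  have e1 : dist (s • P) (s • z) = dist P z := dist_act hi _ _ _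
  have t1 := dist_triangle (s • P) P (s • z)
  have t3 := dist_triangle_left P (s • z) (s • P)
  have h1 := gromov_move_left P (s • P) Q (s • z)
  have h2 := gromov_move_right (s • P) Q (s • Q) (s • z)
  rw [gromov_act hi] at h2
  rw [dist_comm] at hP hQ
  have hc := coord_dist hh (P := P) (Q := Q) (z := z) (w := s • z) (e := 2 * D + e)
    (by linarith) (by linarith)
  have : |dist P z - dist P (s • z)| ≤ D := by
    rw [dist_comm] at hP; rw [abs_le]; constructor <;> linarith
  rw [dist_comm]; linarith

end Action

/-! ### Orbits of loxodromic elements -/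

section Chain

variable {G X : Type*} [Group G] [MetricSpace X] [MulAction G X] {δ : ℝ}

lemma chain_one (hh : IsDeltaHyperbolic X δ) (hδ : 0 < δ) (hi : IsometricAction G X)
    {g : G} {p : X} {A : ℝ} (hA : gromov (g • p) (g⁻¹ • p) p ≤ A)
    (hl : 2 * A + 10 * δ ≤ dist (g • p) p) (r : ℕ) :
    gromov ((g⁻¹) ^ (r + 1) • p) (g • p) p ≤ A + δ := by
  induction r with
  | zero => rw [zero_add, pow_one, gromov_comm]; linarith
  | succ r ih =>
    have e : gromov (g⁻¹ • p) ((g⁻¹) ^ (r + 2) • p) p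
        = dist (g • p) p - gromov ((g⁻¹) ^ (r + 1) • p) (g • p) p := by
      rw [gromov_swap, disp_inv hi, ← gromov_act hi g p, gromov_comm, smul_inv_smul,
        ← mul_smul, pow_succ' _ (r + 1), mul_inv_cancel_left]
    rcases hyp_or hh (g⁻¹ • p) ((g⁻¹) ^ (r + 2) • p) (g • p) p with h | h
    · rw [gromov_comm (g⁻¹ • p) (g • p)] at h; linarith
    · rw [gromov_comm (g⁻¹ • p) (g • p)] at h; linarith

/-- If `g` moves `p` by clearly more than twice the product `(gp, g⁻¹p)_p`, the orbit of `p`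
under `⟨g⟩` is a quasi-geodesic line. -/
lemma chain_nat (hh : IsDeltaHyperbolic X δ) (hδ : 0 < δ) (hi : IsometricAction G X)
    {g : G} {p : X} {A : ℝ} (hA : gromov (g • p) (g⁻¹ • p) p ≤ A)
    (hl : 2 * A + 10 * δ ≤ dist (g • p) p) (r m : ℕ) :
    gromov ((g⁻¹) ^ (r + 1) • p) (g ^ (m + 1) • p) p ≤ A + 2 * δ := by
  have h1 := chain_one hh hδ hi hA hl r
  rcases m with _ | m
  · rw [zero_add, pow_one]; linarith
  · have h2 : gromov (g ^ (m + 1) • p) (g⁻¹ • p) p ≤ A + δ := by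
      have := chain_one hh hδ hi (g := g⁻¹) (p := p) (A := A)
        (by rw [inv_inv, gromov_comm]; exact hA) (by rw [disp_inv hi]; exact hl) m
      rwa [inv_inv] at this
    have e : gromov (g • p) (g ^ (m + 2) • p) p
        = dist (g • p) p - gromov (g ^ (m + 1) • p) (g⁻¹ • p) p := by
      rw [gromov_swap, ← gromov_act hi g⁻¹ p, gromov_comm, inv_smul_smul,
        ← mul_smul, pow_succ' _ (m + 1), inv_mul_cancel_left]
    rcases hyp_or hh ((g⁻¹) ^ (r + 1) • p) (g ^ (m + 2) • p) (g • p) p with h | h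
    · linarith
    · rw [gromov_comm (g ^ (m + 2) • p)] at h; linarith

lemma gromov_base_left {X : Type*} [MetricSpace X] (x t : X) : gromov t x t = 0 := by
  unfold gromov; rw [dist_self, dist_comm]; ring

lemma gromov_base_right {X : Type*} [MetricSpace X] (x t : X) : gromov x t t = 0 := by
  rw [gromov_comm]; exact gromov_base_left x t

lemma chain_int (hh : IsDeltaHyperbolic X δ) (hδ : 0 < δ) (hi : IsometricAction G X)
    {g : G} {p : X} {A : ℝ} (hA : gromov (g • p) (g⁻¹ • p) p ≤ A)
    (hl : 2 * A + 10 * δ ≤ dist (g • p) p) {a b : ℤ} (ha : a ≤ 0) (hb : 0 ≤ b) :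
    gromov (g ^ a • p) (g ^ b • p) p ≤ A + 2 * δ := by
  have hA0 : 0 ≤ A := (gromov_nonneg _ _ _).trans hA
  rcases ha.eq_or_lt with rfl | ha
  · rw [zpow_zero, one_smul, gromov_base_left]; linarith
  rcases hb.eq_or_lt with rfl | hb
  · rw [zpow_zero, one_smul, gromov_base_right]; linarith
  obtain ⟨r, hr⟩ : ∃ r : ℕ, a = -((r + 1 : ℕ) : ℤ) := ⟨(-a - 1).toNat, by omega⟩
  obtain ⟨m, hm⟩ : ∃ m : ℕ, b = ((m + 1 : ℕ) : ℤ) := ⟨(b - 1).toNat, by omega⟩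
  have := chain_nat hh hδ hi hA hl r m
  rwa [hr, hm, zpow_neg, zpow_natCast, zpow_natCast, ← inv_pow]

lemma chain_growth (hh : IsDeltaHyperbolic X δ) (hδ : 0 < δ) (hi : IsometricAction G X)
    {g : G} {p : X} {A : ℝ} (hA : gromov (g • p) (g⁻¹ • p) p ≤ A)
    (hl : 2 * A + 10 * δ ≤ dist (g • p) p) (m : ℕ) :
    m * (dist (g • p) p - 2 * A - 2 * δ) ≤ dist (g ^ m • p) p := by
  have hA0 : 0 ≤ A := (gromov_nonneg _ _ _).trans hA
  induction m with
  | zero => simp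
  | succ m ih =>
    rcases m with _ | m
    · simp only [zero_add, pow_one, Nat.cast_one, one_mul]; linarith
    · have h1 := chain_one hh hδ hi hA hl m
      have h2 : gromov ((g⁻¹) ^ (m + 1) • p) (g • p) p
          = (dist (g ^ (m + 1) • p) p + dist (g • p) p - dist (g ^ (m + 2) • p) p) / 2 := by
        rw [← gromov_act hi (g ^ (m + 1)), inv_pow, smul_inv_smul, ← mul_smul, ← pow_succ, gromov,
          dist_comm p (g ^ (m + 1) • p), dist_comm p, pow_succ _ (m + 1), mul_smul, dist_act hi]
      push_cast at ih ⊢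
      linarith

lemma chain_growth_int (hh : IsDeltaHyperbolic X δ) (hδ : 0 < δ) (hi : IsometricAction G X)
    {g : G} {p : X} {A : ℝ} (hA : gromov (g • p) (g⁻¹ • p) p ≤ A)
    (hl : 2 * A + 10 * δ ≤ dist (g • p) p) (a : ℤ) :
    a.natAbs * (dist (g • p) p - 2 * A - 2 * δ) ≤ dist (g ^ a • p) p := by
  have h := chain_growth hh hδ hi hA hl a.natAbs
  rcases a.natAbs_eq with e | e
  · rw [e, zpow_natCast, Int.natAbs_natCast]; exact h
  · rw [e, zpow_neg, disp_inv hi, zpow_natCast, Int.natAbs_neg, Int.natAbs_natCast]; exact h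

lemma disp_zpow (hi : IsometricAction G X) (g : G) (x : X) (a : ℤ) :
    dist (g ^ a • x) x ≤ a.natAbs * dist (g • x) x := by
  have h := disp_pow hi g x a.natAbs
  rcases a.natAbs_eq with e | e
  · rw [e, zpow_natCast, Int.natAbs_natCast]; exact h
  · rw [e, zpow_neg, disp_inv hi, zpow_natCast, Int.natAbs_neg, Int.natAbs_natCast]; exact h

end Chain

/-! ### Conjugates with parallel axes and acylindricity -/

section Parallel

variable {G X : Type*} [Group G] [MetricSpace X] [MulAction G X] {δ : ℝ}

/-- Two-sided form of `busemann`. -/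
lemma busemann_abs (hh : IsDeltaHyperbolic X δ) {P P' z w : X} {D E : ℝ}
    (hP : dist P P' ≤ D) (hzw : dist z w ≤ E) (hz : D + E + δ < dist P z)
    (hw : D + E + δ < dist P w) :
    |(dist P z - dist P w) - (dist P' z - dist P' w)| ≤ 2 * δ := by
  have h1 := busemann hh hP hzw hz
  have h2 := busemann hh hP (by rw [dist_comm]; exact hzw) hw
  rw [abs_le]; constructor <;> linarith

/-- If `T` almost fixes the ends of a long segment `[P,Q]` along which `a` translates, then `a` and
its conjugate by `T` act in the same way, up to `10δ`, on deep points of `[P,Q]`. -/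
lemma conj_same (hh : IsDeltaHyperbolic X δ) (hδ : 0 < δ) (hi : IsometricAction G X)
    {P Q z : X} {a T : G} {D E : ℝ}
    (haP : dist (a • P) P ≤ E) (haQ : dist (a • Q) Q ≤ E)
    (hTP : dist (T • P) P ≤ D) (hTQ : dist (T • Q) Q ≤ D)
    (hz : gromov P Q z ≤ 0) (hPz : 6 * D + 3 * E + 20 * δ < dist P z)
    (hQz : 6 * D + 3 * E + 20 * δ < dist Q z) :
    dist ((T * a * T⁻¹) • z) (a • z) ≤ 10 * δ := by
  have hD : 0 ≤ D := dist_nonneg.trans hTP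
  have hE : 0 ≤ E := dist_nonneg.trans haP
  have hb : ∀ Y : X, dist (a • Y) Y ≤ E → dist (T • Y) Y ≤ D →
      dist ((T * a * T⁻¹) • Y) Y ≤ 2 * D + E := by
    intro Y h1 h2
    have h3 := disp_mul hi (T * a) T⁻¹ Y
    have h4 := disp_mul hi T a Y
    rw [disp_inv hi] at h3; linarith
  obtain ⟨b1, b2⟩ := mid_act hh hδ.le hi (hb P haP hTP) (hb Q haQ hTQ) hz
    (by linarith) (by linarith)
  obtain ⟨a1, a2⟩ := mid_act hh hδ.le hi haP haQ hz (by linarith) (by linarith)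
  obtain ⟨t1, t2⟩ := mid_act hh hδ.le hi (s := T⁻¹) (D := D) (by rw [disp_inv hi]; exact hTP)
    (by rw [disp_inv hi]; exact hTQ) hz (by linarith) (by linarith)
  set b := T * a * T⁻¹ with hbdef
  set z' := T⁻¹ • z with hz'
  have f1 : dist (T • P) (b • z) = dist P (a • z') := by
    rw [hbdef, mul_smul, mul_smul, dist_act hi]
  have f2 : dist (T • P) z = dist P z' := by
    rw [hz', dist_comm P, dist_act_inv hi, dist_comm]
  have f3 : dist (a⁻¹ • P) z = dist P (a • z) := dist_act_inv hi _ _ _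
  have f4 : dist (a⁻¹ • P) z' = dist P (a • z') := dist_act_inv hi _ _ _
  have g1' := dist_triangle_right P z (b • z)
  have g2' := dist_triangle_right P z z'
  have B1 := busemann_abs hh (P := P) (P' := T • P) (z := z) (w := b • z) (D := D)
    (by rw [dist_comm]; exact hTP) b2 (by linarith) (by linarith)
  have B2 := busemann_abs hh (P := P) (P' := a⁻¹ • P) (z := z) (w := z') (D := E)
    (by rw [dist_comm, disp_inv hi]; exact haP) t2 (by linarith) (by linarith)
  rw [f1, f2] at B1
  rw [f3, f4] at B2
  have hc := coord_dist hh b1 a1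
  have : |dist P (b • z) - dist P (a • z)| ≤ 4 * δ := by
    rw [abs_le] at B1 B2 ⊢; constructor <;> linarith
  linarith

/-- The analogue of `conj_same` when `T` exchanges the ends of `[P,Q]`: then `a` is close to the
conjugate of its inverse. -/
lemma conj_flip (hh : IsDeltaHyperbolic X δ) (hδ : 0 < δ) (hi : IsometricAction G X)
    {P Q z : X} {a T : G} {D E F : ℝ}
    (haP : dist (a • P) P ≤ E) (haQ : dist (a • Q) Q ≤ E)
    (hTP : dist (T • P) Q ≤ D) (hTQ : dist (T • Q) P ≤ D)
    (hz : gromov P Q z ≤ 0) (hF : |dist P z - dist Q z| ≤ F)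
    (hPz : 6 * D + 3 * E + F + 20 * δ < dist P z)
    (hQz : 6 * D + 3 * E + F + 20 * δ < dist Q z) :
    dist ((T * a⁻¹ * T⁻¹) • z) (a • z) ≤ 20 * δ := by
  have hD : 0 ≤ D := dist_nonneg.trans hTP
  have hE : 0 ≤ E := dist_nonneg.trans haP
  have hF0 : 0 ≤ F := (abs_nonneg _).trans hF
  have hb : ∀ Y Y' : X, dist (a • Y') Y' ≤ E → dist (T • Y') Y ≤ D →
      dist ((T * a⁻¹ * T⁻¹) • Y) Y ≤ 2 * D + E := by
    intro Y Y' h1 h2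
    rw [disp_conj hi, disp_inv hi]
    have h3 := disp_base hi a (T⁻¹ • Y) Y'
    rw [dist_act_inv hi T Y Y', dist_comm Y] at h3; linarith
  obtain ⟨b1, b2⟩ := mid_act hh hδ.le hi (hb P Q haQ hTQ) (hb Q P haP hTP) hz
    (by linarith) (by linarith)
  obtain ⟨a1, a2⟩ := mid_act hh hδ.le hi haP haQ hz (by linarith) (by linarith)
  obtain ⟨i1, i2⟩ := mid_act hh hδ.le hi (s := a⁻¹) (D := E) (by rw [disp_inv hi]; exact haP)
    (by rw [disp_inv hi]; exact haQ) hz (by linarith) (by linarith)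
  set b := T * a⁻¹ * T⁻¹ with hbdef
  set z' := T⁻¹ • z with hz'
  have q1 : dist Q z' = dist (T • Q) z := by
    rw [hz', dist_comm Q, dist_act_inv hi, dist_comm]
  have q2 : dist P z' = dist (T • P) z := by
    rw [hz', dist_comm P, dist_act_inv hi, dist_comm]
  have tq1 := dist_triangle (T • Q) P z
  have tq2 := dist_triangle (T • P) Q z
  have tq3 := dist_triangle_left P z (T • Q)
  have tq4 := dist_triangle_left Q z (T • P)
  -- `z'` is again close to `[P,Q]`, and close to `z` since `z` is near the midpoint
  have z1 : gromov P Q z' ≤ 0 + 2 * δ := by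
    refine mid_move hh (P' := T⁻¹ • Q) (Q' := T⁻¹ • P) (D := D) ?_ ?_ ?_ ?_ ?_ hδ.le
    · rw [gromov_act hi, gromov_comm]; exact hz
    · rw [dist_comm, dist_act_inv hi, dist_comm]; exact hTP
    · rw [dist_comm, dist_act_inv hi, dist_comm]; exact hTQ
    · linarith
    · linarith
  have hzz : dist z z' ≤ D + F + 6 * δ := by
    have hc := coord_dist hh (P := P) (Q := Q) (z := z) (w := z') (e := 2 * δ)
      (by linarith) (by linarith)
    have : |dist P z - dist P z'| ≤ D + F := by
      rw [abs_le] at hF ⊢; constructor <;> linarith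
    linarith
  have f1 : dist (T • Q) (b • z) = dist (a • Q) z' := by
    rw [hbdef, mul_smul, mul_smul, dist_act hi, dist_comm, dist_act_inv hi, dist_comm]
  have f2 : dist (T • Q) z = dist Q z' := q1.symm
  have g1' := dist_triangle_right P z (b • z)
  have g2' := dist_triangle_right Q z z'
  have g3' := dist_triangle_right P z (a • z)
  have B1 := busemann_abs hh (P := P) (P' := T • Q) (z := z) (w := b • z) (D := D)
    (by rw [dist_comm]; exact hTQ) b2 (by linarith) (by linarith)
  rw [f1, f2] at B1
  have B2 := busemann_abs hh (P := Q) (P' := a • Q) (z := z) (w := z') (D := E)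
    (by rw [dist_comm]; exact haQ) hzz (by linarith) (by linarith)
  have B3 := busemann_abs hh (P := P) (P' := a • P) (z := z) (w := a • z) (D := E)
    (by rw [dist_comm]; exact haP) a2 (by linarith) (by linarith)
  rw [dist_act hi] at B3
  have f5 : dist (a • Q) z = dist Q (a⁻¹ • z) := by
    rw [dist_comm Q, dist_act_inv hi, dist_comm]
  have f6 : dist (a • P) z = dist P (a⁻¹ • z) := by
    rw [dist_comm P, dist_act_inv hi, dist_comm]
  rw [f5] at B2
  rw [f6] at B3
  have i0 := gromov_nonneg P Q (a⁻¹ • z)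
  have z0 := gromov_nonneg P Q z
  unfold gromov at i1 hz i0 z0
  have hc := coord_dist hh b1 a1
  have : |dist P (b • z) - dist P (a • z)| ≤ 10 * δ := by
    rw [abs_le] at B1 B2 B3 ⊢; constructor <;> linarith
  linarith

/-- A piece of length `κ` in the middle of a long geodesic `[P,Q]`. -/
lemma exists_mid (hg : IsGeodesicSpace X) (P Q : X) {κ : ℝ} (hκ : 0 ≤ κ)
    (hd : 2 * κ ≤ dist P Q) :
    ∃ z₁ z₂ : X, dist z₁ z₂ = κ ∧ gromov P Q z₁ ≤ 0 ∧ gromov P Q z₂ ≤ 0 ∧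
      dist P z₁ = dist P Q / 2 ∧ dist Q z₁ = dist P Q / 2 ∧
      dist P z₂ = dist P Q / 2 + κ ∧ dist Q z₂ = dist P Q / 2 - κ := by
  obtain ⟨f, f0, f1, hf⟩ := hg P Q
  have hd0 : 0 ≤ dist P Q := dist_nonneg
  have m0 : (0 : ℝ) ∈ Set.Icc (0 : ℝ) (dist P Q) := ⟨le_rfl, hd0⟩
  have m1 : dist P Q ∈ Set.Icc (0 : ℝ) (dist P Q) := ⟨hd0, le_rfl⟩
  have n1 : dist P Q / 2 ∈ Set.Icc (0 : ℝ) (dist P Q) := ⟨by linarith, by linarith⟩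
  have n2 : dist P Q / 2 + κ ∈ Set.Icc (0 : ℝ) (dist P Q) := ⟨by linarith, by linarith⟩
  have a1 := hf _ m0 _ n1
  have a2 := hf _ m1 _ n1
  have a3 := hf _ m0 _ n2
  have a4 := hf _ m1 _ n2
  have a5 := hf _ n1 _ n2
  rw [f0, abs_of_nonpos (by linarith)] at a1 a3
  rw [f1, abs_of_nonneg (by linarith)] at a2 a4
  rw [abs_of_nonpos (by linarith)] at a5
  refine ⟨f (dist P Q / 2), f (dist P Q / 2 + κ), by linarith, ?_, ?_, by linarith, by linarith,
    by linarith, by linarith⟩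
  · unfold gromov; linarith
  · unfold gromov; linarith

/-- Among more than `N` elements almost fixing the ends of a segment of length `κ`, two coincide. -/
lemma acyl_pigeon {κ N : ℝ} (ha : AcylindricalAction G X δ κ N) {z₁ z₂ : X}
    (hκ : κ ≤ dist z₁ z₂) {n : ℕ} (hn : N < n + 1) (c : ℕ → G)
    (h1 : ∀ i ≤ n, dist (c i • z₁) z₁ ≤ 100 * δ) (h2 : ∀ i ≤ n, dist (c i • z₂) z₂ ≤ 100 * δ) :
    ∃ i j, i < j ∧ j ≤ n ∧ c i = c j := by
  classical
  obtain ⟨hf, hc⟩ := ha z₁ z₂ hκ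
  have hcard : hf.toFinset.card < (Finset.range (n + 1)).card := by
    rw [← Set.ncard_eq_toFinset_card _ hf, Finset.card_range]
    have : ((Set.ncard {g : G | dist (g • z₁) z₁ ≤ 100 * δ ∧ dist (g • z₂) z₂ ≤ 100 * δ} : ℕ) : ℝ)
        < ((n + 1 : ℕ) : ℝ) := by push_cast; linarith
    exact_mod_cast this
  obtain ⟨i, hi, j, hj, hij, e⟩ := Finset.exists_ne_map_eq_of_card_lt_of_maps_to (f := c) hcard
    (by
      intro i hi
      simp only [Finset.coe_range, Set.mem_Iio] at hi
      simp only [Set.Finite.coe_toFinset, Set.mem_ofPred_eq]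
      exact ⟨h1 i (by omega), h2 i (by omega)⟩)
  simp only [Finset.mem_range] at hi hj
  rcases lt_or_gt_of_ne hij with h | h
  · exact ⟨i, j, h, by omega, e⟩
  · exact ⟨j, i, h, by omega, e.symm⟩

lemma pow_eq_of_pigeon {f g : G} {i j : ℕ} (hij : i < j)
    (h : (g ^ i)⁻¹ * f ^ i = (g ^ j)⁻¹ * f ^ j) : f ^ (j - i) = g ^ (j - i) := by
  obtain ⟨k, rfl⟩ : ∃ k, j = k + i := ⟨j - i, by omega⟩
  rw [Nat.add_sub_cancel]
  rw [pow_add f, ← mul_assoc] at h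
  have h2 := mul_right_cancel h
  rw [add_comm k i, pow_add g] at h2
  have h3 : g ^ i * g ^ k * (g ^ i)⁻¹ = f ^ k := by rw [h2]; group
  rw [← h3, ← pow_add, add_comm, pow_add]; group

lemma pow_move (hi : IsometricAction G X) {g : G} {p : X} {ℓ : ℝ} (hℓ : dist (g • p) p ≤ ℓ)
    {n i : ℕ} (h : i ≤ n) (m : ℕ) :
    dist (g ^ i • g ^ m • p) (g ^ m • p) ≤ n * ℓ := by
  rw [← mul_smul, (Commute.pow_pow_self g i m).eq, mul_smul, dist_act hi]
  have h1 := disp_pow hi g p i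
  have h2 : (i : ℝ) ≤ n := by exact_mod_cast h
  have h3 : 0 ≤ dist (g • p) p := dist_nonneg
  nlinarith [(Nat.cast_nonneg n : (0 : ℝ) ≤ n)]

/-- An element which almost fixes the ends of a long piece `[p, g^M p]` of the axis of `g`
commutes with a small power of `g`. -/
lemma commute_of_fix {κ N : ℝ} (hh : IsDeltaHyperbolic X δ) (hδ : 0 < δ)
    (hi : IsometricAction G X) (hg : IsGeodesicSpace X) (hκ : 0 ≤ κ)
    (ha : AcylindricalAction G X δ κ N) {n : ℕ} (hn : N < n + 1)
    {g T : G} {p : X} {ℓ D : ℝ} {M : ℕ} (hℓ : dist (g • p) p ≤ ℓ)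
    (hTP : dist (T • p) p ≤ D) (hTQ : dist (T • g ^ M • p) (g ^ M • p) ≤ D)
    (hd : 12 * D + 6 * (n * ℓ) + 4 * κ + 50 * δ ≤ dist p (g ^ M • p)) :
    ∃ j, 1 ≤ j ∧ j ≤ n ∧ T * g ^ j * T⁻¹ = g ^ j := by
  have hD : 0 ≤ D := dist_nonneg.trans hTP
  have hℓ0 : 0 ≤ n * ℓ := mul_nonneg (Nat.cast_nonneg n) (dist_nonneg.trans hℓ)
  obtain ⟨z₁, z₂, hz, g1, g2, p1, q1, p2, q2⟩ := exists_mid hg p (g ^ M • p) hκ (by linarith)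
  have key : ∀ z : X, gromov p (g ^ M • p) z ≤ 0 → 6 * D + 3 * (n * ℓ) + 20 * δ < dist p z →
      6 * D + 3 * (n * ℓ) + 20 * δ < dist (g ^ M • p) z → ∀ i ≤ n,
      dist (((g ^ i)⁻¹ * (T * g * T⁻¹) ^ i) • z) z ≤ 100 * δ := by
    intro z h1 h2 h3 i hin
    have := conj_same hh hδ hi (a := g ^ i) (T := T) (D := D) (E := n * ℓ)
      (by simpa using pow_move hi hℓ hin 0) (pow_move hi hℓ hin M) hTP hTQ h1 h2 h3
    rw [mul_smul, dist_act_inv hi, conj_pow]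
    linarith
  obtain ⟨i, j, hij, hj, e⟩ := acyl_pigeon ha hz.ge hn _
    (key z₁ g1 (by linarith) (by linarith)) (key z₂ g2 (by linarith) (by linarith))
  refine ⟨j - i, by omega, by omega, ?_⟩
  have := pow_eq_of_pigeon hij e
  rwa [conj_pow] at this

/-- The analogue of `commute_of_fix` when `T` exchanges the ends of `[p, g^M p]`: it inverts a power
of `g` by conjugation. -/
lemma flip_of_swap {κ N : ℝ} (hh : IsDeltaHyperbolic X δ) (hδ : 0 < δ)
    (hi : IsometricAction G X) (hg : IsGeodesicSpace X) (hκ : 0 ≤ κ)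
    (ha : AcylindricalAction G X δ κ N) {n : ℕ} (hn : N < n + 1)
    {g T : G} {p : X} {ℓ D : ℝ} {M : ℕ} (hℓ : dist (g • p) p ≤ ℓ)
    (hTP : dist (T • p) (g ^ M • p) ≤ D) (hTQ : dist (T • g ^ M • p) p ≤ D)
    (hd : 12 * D + 6 * (n * ℓ) + 6 * κ + 50 * δ ≤ dist p (g ^ M • p)) :
    ∃ j, 1 ≤ j ∧ j ≤ n ∧ T * (g ^ j)⁻¹ * T⁻¹ = g ^ j := by
  have hD : 0 ≤ D := dist_nonneg.trans hTP
  have hℓ0 : 0 ≤ n * ℓ := mul_nonneg (Nat.cast_nonneg n) (dist_nonneg.trans hℓ)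
  obtain ⟨z₁, z₂, hz, g1, g2, p1, q1, p2, q2⟩ := exists_mid hg p (g ^ M • p) hκ (by linarith)
  have key : ∀ z : X, gromov p (g ^ M • p) z ≤ 0 → |dist p z - dist (g ^ M • p) z| ≤ 2 * κ →
      6 * D + 3 * (n * ℓ) + 2 * κ + 20 * δ < dist p z →
      6 * D + 3 * (n * ℓ) + 2 * κ + 20 * δ < dist (g ^ M • p) z → ∀ i ≤ n,
      dist (((g ^ i)⁻¹ * (T * g⁻¹ * T⁻¹) ^ i) • z) z ≤ 100 * δ := by
    intro z h1 hF h2 h3 i hin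
    have := conj_flip hh hδ hi (a := g ^ i) (T := T) (D := D) (E := n * ℓ) (F := 2 * κ)
      (by simpa using pow_move hi hℓ hin 0) (pow_move hi hℓ hin M) hTP hTQ h1 hF h2 h3
    rw [mul_smul, dist_act_inv hi, conj_pow, inv_pow]
    linarith
  obtain ⟨i, j, hij, hj, e⟩ := acyl_pigeon ha hz.ge hn _
    (key z₁ g1 (by rw [p1, q1, sub_self, abs_zero]; linarith) (by linarith) (by linarith))
    (key z₂ g2 (by rw [p2, q2, abs_le]; constructor <;> linarith) (by linarith) (by linarith))
  refine ⟨j - i, by omega, by omega, ?_⟩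
  have := pow_eq_of_pigeon hij e
  rwa [conj_pow, inv_pow] at this

end Parallel

/-! ### The elementary closure of a loxodromic element -/

section Elementary

variable {G X : Type*} [Group G] [MetricSpace X] [MulAction G X] {δ : ℝ}

lemma chain_between (hh : IsDeltaHyperbolic X δ) (hδ : 0 < δ) (hi : IsometricAction G X)
    {g : G} {p : X} {A : ℝ} (hA : gromov (g • p) (g⁻¹ • p) p ≤ A)
    (hl : 2 * A + 10 * δ ≤ dist (g • p) p) {a j b : ℤ} (ha : a ≤ j) (hb : j ≤ b) :
    gromov (g ^ a • p) (g ^ b • p) (g ^ j • p) ≤ A + 2 * δ := by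
  have h := chain_int hh hδ hi hA hl (a := a - j) (b := b - j) (by omega) (by omega)
  rw [← gromov_act hi (g ^ j)] at h
  simpa only [← mul_smul, ← zpow_add, add_sub_cancel] using h

lemma conj_zpow_of (g T : G) {J : ℕ} (hT : T * g ^ J * T⁻¹ = g ^ J) (i : ℤ) :
    T * g ^ ((J : ℤ) * i) = g ^ ((J : ℤ) * i) * T := by
  have : T * (g ^ J) ^ i * T⁻¹ = (g ^ J) ^ i := by rw [← conj_zpow, hT]
  rw [zpow_mul, zpow_natCast]
  exact mul_inv_eq_iff_eq_mul.mp this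

lemma conj_zpow_of_inv (g T : G) {J : ℕ} (hT : T * g ^ J * T⁻¹ = (g ^ J)⁻¹) (i : ℤ) :
    T * g ^ ((J : ℤ) * i) = g ^ (-((J : ℤ) * i)) * T := by
  have : T * (g ^ J) ^ i * T⁻¹ = ((g ^ J) ^ i)⁻¹ := by rw [← conj_zpow, hT, inv_zpow]
  rw [zpow_neg, zpow_mul, zpow_natCast]
  exact mul_inv_eq_iff_eq_mul.mp this

/-- An element normalising `⟨g ^ J⟩` maps the base point close to the `g`-orbit, with a bound which
does not depend on the element. -/
lemma close_of_normalizes (hh : IsDeltaHyperbolic X δ) (hδ : 0 < δ) (hi : IsometricAction G X)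
    {g T : G} {p : X} {A : ℝ} (hA : gromov (g • p) (g⁻¹ • p) p ≤ A)
    (hl : 2 * A + 10 * δ ≤ dist (g • p) p) {J : ℕ} (hJ : 1 ≤ J)
    (hT : T * g ^ J * T⁻¹ = g ^ J ∨ T * g ^ J * T⁻¹ = (g ^ J)⁻¹) :
    ∃ l : ℤ, dist (T • p) (g ^ l • p) ≤ dist (g • p) p + 3 * A + 12 * δ := by
  have hA0 : 0 ≤ A := (gromov_nonneg _ _ _).trans hA
  set ℓ := dist (g • p) p with hℓ
  set D := dist (T • p) p with hD
  have hD0 : 0 ≤ D := dist_nonneg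
  have hc : 0 < ℓ - 2 * A - 2 * δ := by linarith
  obtain ⟨i, hi0⟩ := exists_nat_gt ((2 * D + A + 10 * δ) / (ℓ - 2 * A - 2 * δ))
  rw [div_lt_iff₀ hc] at hi0
  have hm0 : (i : ℝ) ≤ ((J * i : ℕ) : ℝ) := by
    exact_mod_cast Nat.le_mul_of_pos_left i hJ
  set m := J * i with hm
  have hm1 : 2 * D + A + 10 * δ < m * (ℓ - 2 * A - 2 * δ) := by nlinarith
  have far : ∀ a : ℤ, a.natAbs = m → 2 * D + A + 10 * δ < dist (g ^ a • p) p := by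
    intro a ha
    have := chain_growth_int hh hδ hi hA hl a
    rw [ha] at this; linarith
  set z := T • p with hz
  have farz : ∀ a : ℤ, a.natAbs = m → D + A + 10 * δ < dist (g ^ a • p) z := by
    intro a ha
    have h1 := far a ha
    have h2 := dist_triangle (g ^ a • p) z p
    linarith
  have mz : gromov (g ^ (-(m : ℤ)) • p) (g ^ (m : ℤ) • p) z ≤ A + 2 * δ + 2 * δ := by
    have h0 := chain_int hh hδ hi hA hl (a := -(m : ℤ)) (b := m) (by omega) (by omega)
    rw [← gromov_act hi T] at h0
    have f1 := farz (-(m : ℤ)) (by omega)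
    have f2 := farz (m : ℤ) (by omega)
    rcases hT with hT | hT
    · have e : ∀ a : ℤ, (a = (J : ℤ) * i ∨ a = (J : ℤ) * (-i)) →
          dist (g ^ a • p) (T • g ^ a • p) ≤ D := by
        rintro a (rfl | rfl) <;>
        rw [← mul_smul, conj_zpow_of g T hT, mul_smul, dist_act hi, dist_comm]
      refine mid_move hh h0 (e _ (Or.inr ?_)) (e _ (Or.inl ?_)) (by linarith) (by linarith) hδ.le
      · rw [hm]; push_cast; ring
      · rw [hm]; push_cast; ring
    · have e : ∀ a : ℤ, (a = (J : ℤ) * i ∨ a = (J : ℤ) * (-i)) →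
          dist (g ^ (-a) • p) (T • g ^ a • p) ≤ D := by
        rintro a (rfl | rfl) <;>
        rw [← mul_smul, conj_zpow_of_inv g T hT, mul_smul, dist_act hi, dist_comm]
      rw [gromov_comm] at h0
      have e2 := e (-(m : ℤ)) (Or.inr (by rw [hm]; push_cast; ring))
      rw [neg_neg] at e2
      refine mid_move hh h0 (e _ (Or.inl ?_)) e2 (by linarith) (by linarith) hδ.le
      rw [hm]; push_cast; ring
  -- discrete intermediate value argument along the orbit of `g`
  classical
  have hex : ∃ k : ℕ, gromov (g ^ (-(m : ℤ)) • p) (g ^ ((k : ℤ) - m) • p) z ≤ A + 5 * δ := by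
    refine ⟨2 * m, ?_⟩
    have : (((2 * m : ℕ) : ℤ) - m) = m := by push_cast; ring
    rw [this]; linarith
  have hk := Nat.find_spec hex
  have hk2 : Nat.find hex ≤ 2 * m := by
    refine Nat.find_min' hex ?_
    have : (((2 * m : ℕ) : ℤ) - m) = m := by push_cast; ring
    rw [this]; linarith
  have hk3 : Nat.find hex ≠ 0 := by
    intro h0
    rw [h0] at hk
    simp only [Nat.cast_zero, zero_sub] at hk
    rw [gromov_self_eq] at hk
    have := farz (-(m : ℤ)) (by omega)
    linarith
  obtain ⟨k, hkk⟩ := Nat.exists_eq_succ_of_ne_zero hk3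
  have hk4 := Nat.find_min hex (m := k) (by omega)
  rw [hkk] at hk hk2
  push Not at hk4
  have ej : ((k.succ : ℕ) : ℤ) - m = ((k : ℤ) - m) + 1 := by push_cast; ring
  rw [ej] at hk
  set j : ℤ := (k : ℤ) - m with hj
  refine ⟨j, ?_⟩
  have b1 := chain_between hh hδ hi hA hl (a := -(m : ℤ)) (j := j) (b := m) (by omega) (by omega)
  have b2 : gromov (g ^ j • p) (g ^ (m : ℤ) • p) z ≤ A + 5 * δ := by
    rcases hyp_or hh (g ^ (-(m : ℤ)) • p) (g ^ j • p) (g ^ (m : ℤ) • p) z with h | h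
    · linarith
    · linarith
  have s : dist (g ^ (j + 1) • p) (g ^ j • p) = ℓ := by
    rw [zpow_add, zpow_one, mul_smul, dist_act hi]
  have t1 := dist_triangle_right (g ^ j • p) z (g ^ (j + 1) • p)
  have t2 := dist_triangle (g ^ (-(m : ℤ)) • p) (g ^ j • p) (g ^ (j + 1) • p)
  have t3 := dist_triangle (g ^ (j + 1) • p) (g ^ j • p) z
  have t4 := dist_triangle_left (g ^ j • p) z (g ^ (j + 1) • p)
  have t5 := dist_triangle_right (g ^ (-(m : ℤ)) • p) (g ^ (m : ℤ) • p) z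
  rw [dist_comm z (g ^ j • p)]
  rw [dist_comm (g ^ j • p) (g ^ (j + 1) • p)] at t2
  unfold gromov at b1 b2 hk
  rw [dist_comm (g ^ (m : ℤ) • p) (g ^ j • p)] at b1
  linarith

/-- A bound for the number of isometries moving both ends of a very long segment by at most `R`. -/
def countBound (δ R : ℝ) (n : ℕ) : ℕ :=
  n * (Finset.Icc (-(⌈(R + 6 * δ) / (10 * δ)⌉ + 1)) (⌈(R + 6 * δ) / (10 * δ)⌉ + 1)).card

lemma card_le_countBound {κ N R : ℝ} (hh : IsDeltaHyperbolic X δ) (hδ : 0 < δ)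
    (hi : IsometricAction G X) (hg : IsGeodesicSpace X) (hκ : 0 ≤ κ)
    (ha : AcylindricalAction G X δ κ N) {n : ℕ} (hn : N < n + 1) {P Q : X}
    (hd : 10 * (R + κ + 100 * δ) ≤ dist P Q) (F : Finset G)
    (hP : ∀ t ∈ F, dist (t • P) P ≤ R) (hQ : ∀ t ∈ F, dist (t • Q) Q ≤ R) :
    F.card ≤ countBound δ R n := by
  classical
  rcases F.eq_empty_or_nonempty with rfl | ⟨t0, ht0⟩
  · simp
  have hR : 0 ≤ R := dist_nonneg.trans (hP t0 ht0)
  obtain ⟨z₁, z₂, hz, g1, g2, p1, q1, p2, q2⟩ := exists_mid hg P Q hκ (by linarith)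
  have m1 : ∀ t ∈ F, _ := fun t ht => mid_act hh hδ.le hi (hP t ht) (hQ t ht) g1
    (by linarith) (by linarith)
  have m2 : ∀ t ∈ F, _ := fun t ht => mid_act hh hδ.le hi (hP t ht) (hQ t ht) g2
    (by linarith) (by linarith)
  set f : G → ℤ := fun t => ⌊(dist P (t • z₁) - dist P z₁) / (10 * δ)⌋ with hf
  have h1 : F.card ≤ n * (F.image f).card := by
    refine Finset.card_le_mul_card_image F n ?_
    intro b hb
    obtain ⟨t, ht, rfl⟩ := Finset.mem_image.mp hb
    obtain ⟨hfin, hc⟩ := ha z₁ z₂ hz.ge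
    have hle : ({s ∈ F | f s = f t}).card ≤ hfin.toFinset.card := by
      refine Finset.card_le_card_of_injOn (fun s => t⁻¹ * s) ?_ ?_
      · intro s hs
        simp only [Finset.coe_filter, Set.mem_ofPred_eq] at hs
        obtain ⟨hs, hfs⟩ := hs
        have hab : |(dist P (s • z₁) - dist P z₁) / (10 * δ)
            - (dist P (t • z₁) - dist P z₁) / (10 * δ)| < 1 := Int.abs_sub_lt_one_of_floor_eq_floor hfs
        rw [← sub_div, abs_div, abs_of_pos (by linarith : 0 < 10 * δ), div_lt_one (by linarith)] at hab
        have B : ∀ r ∈ F, |(dist P z₁ - dist P z₂) - (dist P (r • z₁) - dist P (r • z₂))| ≤ 2 * δ := by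
          intro r hr
          have := busemann_abs hh (P := P) (P' := r⁻¹ • P) (z := z₁) (w := z₂) (D := R) (E := κ)
            (by rw [dist_comm, disp_inv hi]; exact hP r hr) hz.le (by linarith) (by linarith)
          rwa [dist_act_inv hi, dist_act_inv hi] at this
        have c1 := coord_dist hh (m1 s hs).1 (m1 t ht).1
        have c2 := coord_dist hh (m2 s hs).1 (m2 t ht).1
        have B1 := B s hs
        have B2 := B t ht
        have u1 : |dist P (s • z₁) - dist P (t • z₁)| ≤ 10 * δ := by
          rw [abs_lt] at hab; rw [abs_le]; constructor <;> linarith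
        have u2 : |dist P (s • z₂) - dist P (t • z₂)| ≤ 14 * δ := by
          rw [abs_le] at u1 B1 B2 ⊢; constructor <;> linarith
        simp only [Set.Finite.coe_toFinset, Set.mem_ofPred_eq]
        rw [mul_smul, mul_smul, dist_act_inv hi, dist_act_inv hi]
        constructor <;> linarith
      · intro a _ b _ h
        exact mul_left_cancel h
    refine hle.trans ?_
    rw [← Set.ncard_eq_toFinset_card _ hfin]
    have : ((Set.ncard {g : G | dist (g • z₁) z₁ ≤ 100 * δ ∧ dist (g • z₂) z₂ ≤ 100 * δ} : ℕ) : ℝ)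
        < ((n + 1 : ℕ) : ℝ) := by push_cast; linarith
    exact Nat.lt_succ_iff.mp (by exact_mod_cast this)
  refine h1.trans (Nat.mul_le_mul_left n (Finset.card_le_card ?_))
  intro b hb
  obtain ⟨t, ht, rfl⟩ := Finset.mem_image.mp hb
  have k1 := (m1 t ht).2
  have k2 := dist_triangle P z₁ (t • z₁)
  have k3 := dist_triangle_right P z₁ (t • z₁)
  have k4 : (dist P (t • z₁) - dist P z₁) / (10 * δ) ≤ (R + 6 * δ) / (10 * δ) :=
    div_le_div_of_nonneg_right (by linarith) (by linarith)
  have k5 : -((R + 6 * δ) / (10 * δ)) ≤ (dist P (t • z₁) - dist P z₁) / (10 * δ) := by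
    rw [← neg_div]
    exact div_le_div_of_nonneg_right (by linarith) (by linarith)
  have k6 := Int.le_ceil ((R + 6 * δ) / (10 * δ))
  rw [Finset.mem_Icc]
  constructor
  · refine Int.le_floor.mpr ?_
    push_cast; linarith
  · have := Int.floor_le ((dist P (t • z₁) - dist P z₁) / (10 * δ))
    have h : ((f t : ℤ) : ℝ) ≤ ((⌈(R + 6 * δ) / (10 * δ)⌉ + 1 : ℤ) : ℝ) := by
      push_cast; rw [hf]; linarith
    exact_mod_cast h

lemma finite_of_move {κ N R : ℝ} (hh : IsDeltaHyperbolic X δ) (hδ : 0 < δ)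
    (hi : IsometricAction G X) (hg : IsGeodesicSpace X) (hκ : 0 ≤ κ)
    (ha : AcylindricalAction G X δ κ N) {P Q : X}
    (hd : 10 * (R + κ + 100 * δ) ≤ dist P Q) :
    {t : G | dist (t • P) P ≤ R ∧ dist (t • Q) Q ≤ R}.Finite := by
  obtain ⟨n, hn⟩ := exists_nat_gt N
  by_contra hinf
  obtain ⟨F, hF, hc⟩ := Set.Infinite.exists_subset_card_eq hinf (countBound δ R n + 1)
  have := card_le_countBound hh hδ hi hg hκ ha (n := n) (by linarith) hd F
    (fun t ht => (hF ht).1) (fun t ht => (hF ht).2)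
  omega

/-- If every generator conjugates `g ^ J` to itself or to its inverse, the group is virtually
cyclic. -/
lemma virtuallyCyclic_of_normalizes {κ N : ℝ} (hh : IsDeltaHyperbolic X δ) (hδ : 0 < δ)
    (hi : IsometricAction G X) (hg : IsGeodesicSpace X) (hκ : 0 ≤ κ)
    (ha : AcylindricalAction G X δ κ N) {g : G} {p : X} {A : ℝ}
    (hA : gromov (g • p) (g⁻¹ • p) p ≤ A)
    (hl : 2 * A + 10 * δ ≤ dist (g • p) p) {J : ℕ} (hJ : 1 ≤ J) {U : Set G}
    (hgU : g ∈ Subgroup.closure U)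
    (hU : ∀ t ∈ U, t * g ^ J * t⁻¹ = g ^ J ∨ t * g ^ J * t⁻¹ = (g ^ J)⁻¹) :
    VirtuallyCyclic (Subgroup.closure U) := by
  have hA0 : 0 ≤ A := (gromov_nonneg _ _ _).trans hA
  have hall : ∀ t ∈ Subgroup.closure U, t * g ^ J * t⁻¹ = g ^ J ∨ t * g ^ J * t⁻¹ = (g ^ J)⁻¹ := by
    intro t ht
    induction ht using Subgroup.closure_induction with
    | mem x hx => exact hU x hx
    | one => left; simp
    | mul x y _ _ hx hy =>
      have e : x * y * g ^ J * (x * y)⁻¹ = x * (y * g ^ J * y⁻¹) * x⁻¹ := by group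
      rw [e]
      have e2 : x * (g ^ J)⁻¹ * x⁻¹ = (x * g ^ J * x⁻¹)⁻¹ := by group
      rcases hy with hy | hy <;> rw [hy]
      · exact hx
      · rw [e2]
        rcases hx with hx | hx <;> rw [hx]
        · right; rfl
        · left; rw [inv_inv]
    | inv x _ hx =>
      rw [inv_inv]
      rcases hx with hx | hx
      · left
        have : x⁻¹ * (x * g ^ J * x⁻¹) * x = g ^ J := by group
        rwa [hx] at this
      · right
        have : g ^ J = (x * (g ^ J) * x⁻¹)⁻¹ := by rw [hx, inv_inv]
        nth_rewrite 1 [this]; group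
  set R := dist (g • p) p + 3 * A + 12 * δ with hR
  have hR0 : 0 ≤ R := by have : 0 ≤ dist (g • p) p := dist_nonneg; linarith
  have hc : 0 < dist (g • p) p - 2 * A - 2 * δ := by linarith
  obtain ⟨i, hi0⟩ := exists_nat_gt ((10 * (2 * R + κ + 100 * δ)) / (dist (g • p) p - 2 * A - 2 * δ))
  rw [div_lt_iff₀ hc] at hi0
  have hm0 : (i : ℝ) ≤ ((J * i : ℕ) : ℝ) := by
    exact_mod_cast Nat.le_mul_of_pos_left i hJ
  have hgr := chain_growth hh hδ hi hA hl (J * i)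
  have hfar : 10 * (2 * R + κ + 100 * δ) ≤ dist p (g ^ (J * i) • p) := by
    rw [dist_comm]; nlinarith
  have hfin := finite_of_move hh hδ hi hg hκ ha hfar
  have hcomm : ∀ t : G, t * g ^ J * t⁻¹ = g ^ J → dist (t • p) p ≤ 2 * R →
      t ∈ {t : G | dist (t • p) p ≤ 2 * R ∧
        dist (t • g ^ (J * i) • p) (g ^ (J * i) • p) ≤ 2 * R} := by
    intro t ht h
    refine ⟨h, ?_⟩
    have := conj_zpow_of g t ht i
    have e : t * g ^ (J * i) = g ^ (J * i) * t := by exact_mod_cast this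
    rw [← mul_smul, e, mul_smul, dist_act hi]; exact h
  have hB : {t : G | t ∈ Subgroup.closure U ∧ dist (t • p) p ≤ R}.Finite := by
    by_cases hex : ∃ t1 ∈ Subgroup.closure U, dist (t1 • p) p ≤ R ∧ t1 * g ^ J * t1⁻¹ = (g ^ J)⁻¹
    · obtain ⟨t1, ht1, hd1, hc1⟩ := hex
      refine (hfin.union (hfin.image (fun s => t1 * s))).subset ?_
      rintro t ⟨ht, hd⟩
      rcases hall t ht with h | h
      · left; exact hcomm t h (by linarith)
      · right
        refine ⟨t1⁻¹ * t, hcomm _ ?_ ?_, by simp⟩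
        · have e : t1⁻¹ * t * g ^ J * (t1⁻¹ * t)⁻¹ = t1⁻¹ * (t * g ^ J * t⁻¹) * t1 := by group
          rw [e, h, ← hc1]; group
        · have := disp_mul hi t1⁻¹ t p
          rw [disp_inv hi] at this; linarith
    · push Not at hex
      refine hfin.subset ?_
      rintro t ⟨ht, hd⟩
      rcases hall t ht with h | h
      · exact hcomm t h (by linarith)
      · exact absurd h (hex t ht hd)
  refine ⟨Subgroup.zpowers ⟨g, hgU⟩, inferInstance, ?_⟩
  have hfinQ : Finite (↥(Subgroup.closure U) ⧸ Subgroup.zpowers (⟨g, hgU⟩ : Subgroup.closure U)) := by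
    have := hB.to_subtype
    refine Finite.of_surjective (fun t : {t : G | t ∈ Subgroup.closure U ∧ dist (t • p) p ≤ R} =>
      (QuotientGroup.mk (⟨t.1, t.2.1⟩ : Subgroup.closure U) :
        ↥(Subgroup.closure U) ⧸ Subgroup.zpowers (⟨g, hgU⟩ : Subgroup.closure U))) ?_
    intro q
    induction q using QuotientGroup.induction_on with
    | H h =>
      obtain ⟨l, hl'⟩ := close_of_normalizes hh hδ hi hA hl hJ (hall _ (inv_mem h.2))
      refine ⟨⟨h.1 * g ^ l, mul_mem h.2 (zpow_mem hgU l), ?_⟩, ?_⟩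
      · rw [dist_act_inv hi] at hl'
        rw [mul_smul, dist_comm]; exact hl'
      · rw [QuotientGroup.eq]
        refine ⟨-l, ?_⟩
        ext
        simp
  exact Subgroup.finiteIndex_of_finite_quotient

end Elementary

/-! ### Energy, and a loxodromic element produced at an almost minimal point -/

section Energy

variable {G X : Type*} [Group G] [MetricSpace X] [MulAction G X] {δ : ℝ}

lemma disp_le_energyAt {W : Set G} (hW : W.Finite) {u : G} (hu : u ∈ W) (p : X) :
    dist (u • p) p ≤ energyAt W p :=
  le_csSup (hW.image _).bddAbove ⟨u, hu, rfl⟩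

lemma energyAt_le {W : Set G} (hne : W.Nonempty) {p : X} {c : ℝ}
    (h : ∀ u ∈ W, dist (u • p) p ≤ c) : energyAt W p ≤ c := by
  refine csSup_le (hne.image _) ?_
  rintro _ ⟨u, hu, rfl⟩
  exact h u hu

lemma exists_eq_energyAt {W : Set G} (hW : W.Finite) (hne : W.Nonempty) (p : X) :
    ∃ u ∈ W, dist (u • p) p = energyAt W p := by
  obtain ⟨u, hu, e⟩ := (hne.image (fun u : G => dist (u • p) p)).csSup_mem (hW.image _)
  exact ⟨u, hu, e⟩

lemma energyAt_nonneg (W : Set G) (p : X) : 0 ≤ energyAt W p := by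
  refine Real.sSup_nonneg ?_
  rintro _ ⟨u, -, rfl⟩
  exact dist_nonneg

lemma energy_le (W : Set G) (p : X) : energy X W ≤ energyAt W p :=
  csInf_le ⟨0, by rintro _ ⟨x, rfl⟩; exact energyAt_nonneg W x⟩ ⟨p, rfl⟩

lemma exists_energyAt_lt [Nonempty X] (W : Set G) {c : ℝ} (h : energy X W < c) :
    ∃ p : X, energyAt W p < c := by
  obtain ⟨_, ⟨p, rfl⟩, hp⟩ := exists_lt_of_csInf_lt (Set.range_nonempty _) h
  exact ⟨p, hp⟩

/-- At an almost minimal point of the energy, two elements of almost maximal displacement move the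
point in different directions: otherwise moving the point in the common direction would decrease
the energy. -/
lemma exists_diverging (hh : IsDeltaHyperbolic X δ) (hδ : 0 < δ) (hi : IsometricAction G X)
    (hg : IsGeodesicSpace X) {W : Set G} (hW : W.Finite) (hne : W.Nonempty) (hsym : W⁻¹ = W)
    {p : X} (hp : energyAt W p < energy X W + δ) (hbig : 100 * δ ≤ energyAt W p) :
    ∃ a ∈ W, ∃ b ∈ W, energyAt W p - 30 * δ ≤ dist (a • p) p ∧
      energyAt W p - 30 * δ ≤ dist (b • p) p ∧ gromov (a • p) (b • p) p < 10 * δ := by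
  by_contra hcon
  push Not at hcon
  obtain ⟨v, hv, hve⟩ := exists_eq_energyAt hW hne p
  set lam := energyAt W p with hlam
  obtain ⟨f, f0, f1, hf⟩ := hg p (v • p)
  rw [dist_comm p (v • p), hve] at f1 hf
  have m0 : (0 : ℝ) ∈ Set.Icc (0 : ℝ) lam := ⟨le_rfl, by linarith⟩
  have m1 : 10 * δ ∈ Set.Icc (0 : ℝ) lam := ⟨by linarith, by linarith⟩
  have m2 : lam ∈ Set.Icc (0 : ℝ) lam := ⟨by linarith, le_rfl⟩
  have d1 := hf _ m1 _ m0
  have d2 := hf _ m1 _ m2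
  rw [f0, abs_of_nonneg (by linarith)] at d1
  rw [f1, abs_of_nonpos (by linarith)] at d2
  set q := f (10 * δ) with hq
  have qv : gromov q (v • p) p = 10 * δ := by unfold gromov; rw [hve]; linarith
  have key : energyAt W q ≤ lam - 10 * δ := by
    refine energyAt_le hne ?_
    intro u hu
    have hule := disp_le_energyAt hW hu p
    by_cases hs : dist (u • p) p < lam - 30 * δ
    · have := disp_base hi u q p
      linarith
    · push Not at hs
      have hu' : u⁻¹ ∈ W := by rw [← hsym]; simpa using hu
      have near : ∀ w ∈ W, dist (w • p) p = dist (u • p) p →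
          dist q (w • p) ≤ dist (u • p) p - 8 * δ := by
        intro w hw e
        have h1 := hcon w hw v hv (by linarith) (by linarith)
        rcases hyp_or hh q (v • p) (w • p) p with h | h
        · rw [qv] at h; unfold gromov at h; linarith
        · rw [gromov_comm] at h; unfold gromov at h
          unfold gromov at h1; linarith
      have n1 := near u hu rfl
      have n2 := near u⁻¹ hu' (disp_inv hi u p)
      rw [dist_comm, dist_act_inv hi, dist_comm] at n2
      have e1 : dist (u • q) (u • p) = dist q p := dist_act hi _ _ _
      rcases four_or hh (u • q) q p (u • p) with h | h <;> rw [dist_comm p (u • p)] at h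
      · linarith
      · linarith
  have := energy_le W q
  linarith

/-- A product of two elements of `W` translating the almost minimal point `p` along a
quasi-geodesic. -/
lemma exists_lox (hh : IsDeltaHyperbolic X δ) (hδ : 0 < δ) (hi : IsometricAction G X)
    (hg : IsGeodesicSpace X) {W : Set G} (hW : W.Finite) (hne : W.Nonempty) (hsym : W⁻¹ = W)
    {p : X} (hp : energyAt W p < energy X W + δ) (hbig : 10000 * δ ≤ energyAt W p) :
    ∃ g ∈ W ^ 2, gromov (g • p) (g⁻¹ • p) p ≤ 0.41 * energyAt W p ∧
      1.1 * energyAt W p ≤ dist (g • p) p ∧ dist (g • p) p ≤ 2 * energyAt W p := by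
  obtain ⟨a, ha, b, hb, da, db, hab⟩ :=
    exists_diverging hh hδ hi hg hW hne hsym hp (by linarith)
  have la := disp_le_energyAt hW ha p
  have lb := disp_le_energyAt hW hb p
  set lam := energyAt W p with hlam
  have hsq : ∀ a ∈ W, lam - 30 * δ ≤ dist (a • p) p → gromov (a • p) (a⁻¹ • p) p ≤ 0.4 * lam →
      ∃ g ∈ W ^ 2, gromov (g • p) (g⁻¹ • p) p ≤ 0.41 * lam ∧
      1.1 * lam ≤ dist (g • p) p ∧ dist (g • p) p ≤ 2 * lam := by
    intro a ha da h
    have la := disp_le_energyAt hW ha p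
    refine ⟨a ^ 2, Set.pow_mem_pow ha, ?_, ?_, ?_⟩
    · have := chain_int hh hδ hi h (by linarith) (a := -2) (b := 2) (by norm_num) (by norm_num)
      rw [gromov_comm] at this
      have e1 : a ^ (2 : ℤ) = a ^ 2 := by norm_cast
      have e2 : a ^ (-2 : ℤ) = (a ^ 2)⁻¹ := by rw [zpow_neg, e1]
      rw [e1, e2] at this
      linarith
    · unfold gromov at h
      rw [disp_inv hi, dist_comm (a • p) (a⁻¹ • p), dist_act_inv hi, dist_comm p (a • a • p),
        ← mul_smul, ← pow_two] at h
      linarith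
    · have := disp_pow hi a p 2
      push_cast at this; linarith
  by_cases h1 : gromov (a • p) (a⁻¹ • p) p ≤ 0.4 * lam
  · exact hsq a ha da h1
  by_cases h2 : gromov (b • p) (b⁻¹ • p) p ≤ 0.4 * lam
  · exact hsq b hb db h2
  push Not at h1 h2
  have ha' : a⁻¹ ∈ W := by rw [← hsym]; simpa using ha
  have ed : dist ((a⁻¹ * b) • p) p = dist (a • p) (b • p) := by
    rw [mul_smul, dist_act_inv hi, dist_comm]
  refine ⟨a⁻¹ * b, by rw [pow_two]; exact Set.mul_mem_mul ha' hb, ?_, ?_, ?_⟩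
  · have x1 : gromov ((a⁻¹ * b) • p) (a⁻¹ • p) p = dist (a • p) p - gromov (a • p) (b • p) p := by
      rw [← gromov_act hi a, mul_smul, smul_inv_smul, smul_inv_smul]
      unfold gromov; rw [dist_comm p (a • p), dist_comm (b • p) (a • p)]; ring
    have x2 : gromov ((a⁻¹ * b)⁻¹ • p) (b⁻¹ • p) p = dist (b • p) p - gromov (a • p) (b • p) p := by
      rw [← gromov_act hi b, mul_inv_rev, inv_inv, mul_smul, smul_inv_smul, smul_inv_smul]
      unfold gromov; rw [dist_comm p (b • p)]; ring
    by_contra hc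
    push Not at hc
    have y1 : 0.4 * lam - δ ≤ gromov ((a⁻¹ * b) • p) (a • p) p := by
      rcases hyp_or hh ((a⁻¹ * b) • p) (a⁻¹ • p) (a • p) p with h | h
      · linarith
      · rw [gromov_comm] at h; linarith
    have y2 : 0.4 * lam - δ ≤ gromov ((a⁻¹ * b)⁻¹ • p) (b • p) p := by
      rcases hyp_or hh ((a⁻¹ * b)⁻¹ • p) (b⁻¹ • p) (b • p) p with h | h
      · linarith
      · rw [gromov_comm] at h; linarith
    rcases hyp_or hh (a • p) ((a⁻¹ * b) • p) (b • p) p with h | h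
    · rw [gromov_comm] at h; linarith
    · rcases hyp_or hh ((a⁻¹ * b) • p) ((a⁻¹ * b)⁻¹ • p) (b • p) p with h' | h'
      · linarith
      · linarith
  · rw [ed]; unfold gromov at hab; linarith
  · have := dist_triangle_right (a • p) (b • p) p
    rw [ed]; linarith

end Energy

/-! ### Divergence of the orbits of two independent loxodromic elements -/

section Diverge

/-- The standing hypotheses: an acylindrical action on a geodesic hyperbolic space, a length scale
`lam` much larger than `κ`, and an integer `n` larger than `N`. -/
structure Ambient (G X : Type*) [Group G] [MetricSpace X] [MulAction G X]
    (δ κ N lam : ℝ) (n : ℕ) : Prop where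
  hyp : IsDeltaHyperbolic X δ
  pos : 0 < δ
  act : IsometricAction G X
  geo : IsGeodesicSpace X
  acyl : AcylindricalAction G X δ κ N
  dk : δ ≤ κ
  kl : 10000 * κ ≤ lam
  hn : N < n

/-- The element `g` translates `p` by about `lam`, along a quasi-geodesic. -/
structure Translates {G X : Type*} [Group G] [MetricSpace X] [MulAction G X]
    (lam : ℝ) (g : G) (p : X) : Prop where
  turn : gromov (g • p) (g⁻¹ • p) p ≤ 0.41 * lam
  lower : 1.1 * lam ≤ dist (g • p) p
  upper : dist (g • p) p ≤ 2 * lam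

variable {G X : Type*} [Group G] [MetricSpace X] [MulAction G X] {δ κ N lam : ℝ} {n : ℕ}

lemma Translates.inv (hi : IsometricAction G X) {g : G} {p : X} (h : Translates lam g p) :
    Translates lam g⁻¹ p :=
  ⟨by rw [inv_inv, gromov_comm]; exact h.turn, by rw [disp_inv hi]; exact h.lower,
    by rw [disp_inv hi]; exact h.upper⟩

lemma Translates.conj (hi : IsometricAction G X) {g : G} {p : X} (h : Translates lam g p) (t : G) :
    Translates lam (t * g * t⁻¹) (t • p) := by
  have e : ∀ f : G, (t * f * t⁻¹) • t • p = t • f • p := by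
    intro f; rw [← mul_smul, ← mul_smul]; congr 1; group
  have e' : (t * g * t⁻¹)⁻¹ = t * g⁻¹ * t⁻¹ := by group
  refine ⟨?_, ?_, ?_⟩
  · rw [e', e, e, gromov_act hi]; exact h.turn
  · rw [e, dist_act hi]; exact h.lower
  · rw [e, dist_act hi]; exact h.upper

lemma Ambient.dl (E : Ambient G X δ κ N lam n) : 10000 * δ ≤ lam := by
  linarith [E.dk, E.kl]

lemma Translates.long (E : Ambient G X δ κ N lam n) {g : G} {p : X} (h : Translates lam g p) :
    2 * (0.41 * lam) + 10 * δ ≤ dist (g • p) p := by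
  linarith [h.lower, E.dl, E.pos]

lemma Translates.growth (E : Ambient G X δ κ N lam n) {g : G} {p : X} (h : Translates lam g p)
    (m : ℕ) : m * (0.27 * lam) ≤ dist (g ^ m • p) p := by
  have h1 := chain_growth E.hyp E.pos E.act h.turn (h.long E) m
  refine le_trans ?_ h1
  refine mul_le_mul_of_nonneg_left ?_ (Nat.cast_nonneg m)
  linarith [h.lower, E.dl, E.pos]

lemma Translates.move (hi : IsometricAction G X) {g : G} {p : X} (h : Translates lam g p)
    (m : ℕ) : dist (g ^ m • p) p ≤ m * (2 * lam) :=
  (disp_pow hi g p m).trans (mul_le_mul_of_nonneg_left h.upper (Nat.cast_nonneg m))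

/-- If the orbits of `g` and of `t f t⁻¹` fellow travel for a long time then their `I`-th points
are close. -/
lemma near_of_fellow (E : Ambient G X δ κ N lam n) {g f t : G} {p : X} (hg : Translates lam g p)
    (hf : Translates lam f p) (ht : dist (t • p) p ≤ lam) {I l l' : ℕ} (hl : I ≤ l) (hl' : I ≤ l')
    (he : dist (f ^ I • p) p = dist (g ^ I • p) p)
    (hK : dist (g ^ I • p) p ≤ gromov (g ^ l • p) (t • f ^ l' • p) p) :
    dist (t • f ^ I • p) (g ^ I • p) ≤ 4 * lam := by
  have hδ := E.pos
  have hδl := E.dl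
  have aux : ∀ f : G, Translates lam f p → ∀ l, I ≤ l →
      dist (f ^ I • p) p - 0.41 * lam - 2 * δ ≤ gromov (f ^ I • p) (f ^ l • p) p := by
    intro f hf l hl
    have h := chain_between E.hyp E.pos E.act hf.turn (hf.long E) (a := 0) (j := I) (b := l)
      (by omega) (by omega)
    rw [zpow_zero, one_smul, zpow_natCast, zpow_natCast] at h
    rw [gromov_swap]; linarith
  have a1 := aux g hg l hl
  have a2 := aux f hf l' hl'
  rw [← gromov_act E.act t] at a2
  have a3 := gromov_move_base (t • f ^ I • p) (t • f ^ l' • p) (t • p) p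
  have b1 : dist (g ^ I • p) p - 1.41 * lam - 3 * δ
      ≤ gromov (g ^ l • p) (t • f ^ I • p) p := by
    rcases hyp_or E.hyp (g ^ l • p) (t • f ^ l' • p) (t • f ^ I • p) p with h | h
    · linarith
    · rw [gromov_comm] at h; linarith
  have b2 : dist (g ^ I • p) p - 1.41 * lam - 4 * δ
      ≤ gromov (g ^ I • p) (t • f ^ I • p) p := by
    rcases hyp_or E.hyp (g ^ I • p) (g ^ l • p) (t • f ^ I • p) p with h | h
    · linarith
    · linarith
  have b3 := dist_triangle (t • f ^ I • p) (t • p) p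
  rw [dist_act E.act] at b3
  unfold gromov at b2
  rw [dist_comm]; linarith

lemma pow_conj_of_dvd {g t : G} {j J : ℕ} (hj : j ∣ J) (h : t * g ^ j * t⁻¹ = g ^ j) :
    t * g ^ J * t⁻¹ = g ^ J := by
  obtain ⟨i, rfl⟩ := hj
  rw [pow_mul, ← conj_pow, h]

lemma pow_conj_inv_of_dvd {g t : G} {j J : ℕ} (hj : j ∣ J) (h : t * g ^ j * t⁻¹ = (g ^ j)⁻¹) :
    t * g ^ J * t⁻¹ = (g ^ J)⁻¹ := by
  obtain ⟨i, rfl⟩ := hj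
  rw [pow_mul, ← conj_pow, h, inv_pow]

/-- The orbits of `g` and of `t g t⁻¹` diverge unless `t` normalises `⟨g ^ J⟩`. -/
lemma diverge (E : Ambient G X δ κ N lam n) {g t : G} {p : X} (hg : Translates lam g p)
    (ht : dist (t • p) p ≤ lam) {J : ℕ} (hJ : ∀ j, 1 ≤ j → j ≤ n → j ∣ J)
    (h1 : t * g ^ J * t⁻¹ ≠ g ^ J) (h2 : t * g ^ J * t⁻¹ ≠ (g ^ J)⁻¹) (l l' : ℤ) :
    gromov (g ^ l • p) (t • g ^ l' • p) p ≤ 601 * ((n + 1) * lam) := by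
  have hδ := E.pos
  have hδl := E.dl
  have hκl := E.kl
  have hdk := E.dk
  have hn0 : (0 : ℝ) ≤ n := Nat.cast_nonneg n
  have hlam : 0 < lam := by linarith
  have hnl : 0 ≤ n * lam := mul_nonneg hn0 hlam.le
  obtain ⟨I, hI⟩ : ∃ I : ℕ, I = 300 * (n + 1) := ⟨_, rfl⟩
  have hIr : (I : ℝ) = 300 * (n + 1) := by rw [hI]; push_cast; ring
  -- it suffices to treat nonnegative exponents, allowing `g` and `f` to be `g` or `g⁻¹`
  have main : ∀ g f : G, Translates lam g p → (f = g ∨ f = g⁻¹) →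
      (t * g ^ J * t⁻¹ ≠ g ^ J) → (t * g ^ J * t⁻¹ ≠ (g ^ J)⁻¹) → ∀ l l' : ℕ,
      gromov (g ^ l • p) (t • f ^ l' • p) p ≤ 601 * ((n + 1) * lam) := by
    intro g f hg hfg h1 h2 l l'
    have hf : Translates lam f p := by
      rcases hfg with rfl | rfl
      · exact hg
      · exact hg.inv E.act
    have he : dist (f ^ I • p) p = dist (g ^ I • p) p := by
      rcases hfg with rfl | rfl
      · rfl
      · rw [inv_pow, disp_inv E.act]
    have mI := hg.move E.act I
    have gI := hg.growth E I
    rw [hIr] at mI gI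
    by_contra hcon
    push Not at hcon
    have short : ∀ (f : G), Translates lam f p → ∀ l : ℕ, l < I →
        dist (f ^ l • p) p ≤ 600 * ((n + 1) * lam) := by
      intro f hf l hlI
      have h := hf.move E.act l
      have : (l : ℝ) ≤ I := by exact_mod_cast hlI.le
      rw [hIr] at this
      nlinarith
    have hlI : I ≤ l := by
      by_contra hlt
      have k1 := short g hg l (by omega)
      have k2 := gromov_le_left (g ^ l • p) (t • f ^ l' • p) p
      nlinarith
    have hlI' : I ≤ l' := by
      by_contra hlt
      have k1 := short f hf l' (by omega)
      have k2 := gromov_le_right (g ^ l • p) (t • f ^ l' • p) p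
      have k3 := dist_triangle (t • f ^ l' • p) (t • p) p
      rw [dist_act E.act] at k3
      nlinarith
    have near := near_of_fellow E hg hf ht hlI hlI' he (by nlinarith)
    rcases hfg with rfl | rfl
    · obtain ⟨j, j1, j2, hj⟩ := commute_of_fix E.hyp E.pos E.act E.geo (by linarith) E.acyl
        (n := n) (by linarith [E.hn]) (g := f) (T := t) (p := p) (D := 4 * lam) (M := I) hg.upper
        (by linarith) near (by rw [dist_comm]; nlinarith)
      exact h1 (pow_conj_of_dvd (hJ j j1 j2) hj)
    · rw [inv_pow] at near
      obtain ⟨j, j1, j2, hj⟩ := flip_of_swap E.hyp E.pos E.act E.geo (by linarith) E.acyl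
        (n := n) (by linarith [E.hn]) (g := g) (T := t * (g ^ I)⁻¹) (p := p) (D := 4 * lam)
        (M := I) hg.upper (by rw [mul_smul]; exact near)
        (by rw [mul_smul, inv_smul_smul]; linarith) (by rw [dist_comm]; nlinarith)
      refine h2 (pow_conj_inv_of_dvd (hJ j j1 j2) ?_)
      have e : t * (g ^ I)⁻¹ * (g ^ j)⁻¹ * (t * (g ^ I)⁻¹)⁻¹ = (t * g ^ j * t⁻¹)⁻¹ := by
        have c : (g ^ I)⁻¹ * (g ^ j)⁻¹ = (g ^ j)⁻¹ * (g ^ I)⁻¹ :=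
          ((Commute.pow_pow_self g I j).inv_inv).eq
        rw [mul_assoc t, c]; group
      rw [e] at hj
      exact inv_inj.mp (by rw [hj, inv_inv])
  have n1 : t * g⁻¹ ^ J * t⁻¹ ≠ g⁻¹ ^ J := by
    intro h; apply h1
    have := congrArg (·⁻¹) h
    simpa [mul_assoc] using this
  have n2 : t * g⁻¹ ^ J * t⁻¹ ≠ (g⁻¹ ^ J)⁻¹ := by
    intro h; apply h2
    have := congrArg (·⁻¹) h
    simpa [mul_assoc] using this
  obtain ⟨a, rfl | rfl⟩ := l.eq_nat_or_neg <;> obtain ⟨b, rfl | rfl⟩ := l'.eq_nat_or_neg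
  · simpa using main g g hg (Or.inl rfl) h1 h2 a b
  · simpa using main g g⁻¹ hg (Or.inr rfl) h1 h2 a b
  · simpa using main g⁻¹ g (hg.inv E.act) (Or.inr (inv_inv g).symm) n1 n2 a b
  · simpa using main g⁻¹ g⁻¹ (hg.inv E.act) (Or.inl rfl) n1 n2 a b

end Diverge

/-! ### Elements almost fixing a product of two independent loxodromic elements -/

section PingPair

variable {G X : Type*} [Group G] [MetricSpace X] [MulAction G X] {δ κ N lam : ℝ} {n : ℕ}

/-- An elliptic isometry moving the ends of a segment by at most `D` moves the deep points of the
segment by at most `100δ`: otherwise it would translate along the segment and have unbounded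
orbits. -/
lemma small_of_bounded (hh : IsDeltaHyperbolic X δ) (hδ : 0 < δ) (hi : IsometricAction G X)
    {P Q z : X} {s : G} {D B : ℝ} (hP : dist (s • P) P ≤ D) (hQ : dist (s • Q) Q ≤ D)
    (hz : gromov P Q z ≤ 0) (hPz : 10 * D + 100 * δ < dist P z)
    (hQz : 10 * D + 100 * δ < dist Q z) (hB : ∀ i : ℕ, dist (s ^ i • z) z ≤ B) :
    dist (s • z) z ≤ 100 * δ := by
  have hD : 0 ≤ D := dist_nonneg.trans hP
  by_contra hcon
  push Not at hcon
  obtain ⟨a1, a2⟩ := mid_act hh hδ.le hi hP hQ hz (by linarith) (by linarith)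
  obtain ⟨b1, b2⟩ := mid_act hh hδ.le hi (s := s⁻¹) (D := D) (by rw [disp_inv hi]; exact hP)
    (by rw [disp_inv hi]; exact hQ) hz (by linarith) (by linarith)
  have t1 := dist_triangle_right P z (s⁻¹ • z)
  have B1 := busemann_abs hh (P := P) (P' := s⁻¹ • P) (z := z) (w := s⁻¹ • z) (D := D)
    (by rw [dist_comm, disp_inv hi]; exact hP) b2 (by linarith) (by linarith)
  rw [dist_act hi, dist_act_inv hi] at B1
  have c1 := coord_dist hh a1 (hz.trans (by linarith) : gromov P Q z ≤ 2 * δ)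
  have t2 := dist_triangle P (s⁻¹ • z) (s • z)
  have t3 := dist_triangle_right P (s⁻¹ • z) (s • z)
  rw [dist_comm (s⁻¹ • z) (s • z)] at t2 t3
  have hA : gromov (s • z) (s⁻¹ • z) z ≤ 7 * δ := by
    unfold gromov
    rw [disp_inv hi]
    rw [abs_le] at B1
    rcases abs_cases (dist P (s • z) - dist P z) with ⟨h, -⟩ | ⟨h, -⟩ <;> rw [h] at c1 <;> linarith
  obtain ⟨m, hm⟩ := exists_nat_gt (B / (84 * δ))
  rw [div_lt_iff₀ (by linarith)] at hm
  have g1 := chain_growth hh hδ hi hA (by linarith) m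
  have g2 := hB m
  have : (m : ℝ) * (84 * δ) ≤ m * (dist (s • z) z - 2 * (7 * δ) - 2 * δ) :=
    mul_le_mul_of_nonneg_left (by linarith) (Nat.cast_nonneg m)
  linarith

/-- Two elements translating points near `p` by about `lam`, whose orbits diverge quickly. -/
structure PingPair (lam : ℝ) (n : ℕ) (p px py : X) (rx ry : G) : Prop where
  dx : dist px p ≤ lam
  dy : dist py p ≤ lam
  tx : Translates lam rx px
  ty : Translates lam ry py
  div : ∀ l l' : ℤ, gromov (rx ^ l • px) (ry ^ l' • py) p ≤ 601 * ((n + 1) * lam)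

variable {p px py : X} {rx ry : G}

lemma PingPair.symm (h : PingPair lam n p px py rx ry) : PingPair lam n p py px ry rx :=
  ⟨h.dy, h.dx, h.ty, h.tx, fun l l' => by rw [gromov_comm]; exact h.div l' l⟩

lemma PingPair.inv (hi : IsometricAction G X) (h : PingPair lam n p px py rx ry) :
    PingPair lam n p px py rx⁻¹ ry⁻¹ :=
  ⟨h.dx, h.dy, h.tx.inv hi, h.ty.inv hi, fun l l' => by
    rw [inv_zpow', inv_zpow']; exact h.div _ _⟩

lemma Ambient.lam_pos (E : Ambient G X δ κ N lam n) : 0 < lam := by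
  linarith [E.dl, E.pos]

lemma PingPair.div' (E : Ambient G X δ κ N lam n) (h : PingPair lam n p px py rx ry) (l l' : ℤ) :
    gromov (rx ^ l • p) (ry ^ l' • p) p ≤ 603 * ((n + 1) * lam) := by
  have h1 := gromov_move_left (rx ^ l • p) (rx ^ l • px) (ry ^ l' • p) p
  have h2 := gromov_move_right (rx ^ l • px) (ry ^ l' • p) (ry ^ l' • py) p
  rw [dist_act E.act, dist_comm] at h1 h2
  have := h.div l l'
  have := h.dx
  have := h.dy
  have : 0 ≤ n * lam := mul_nonneg (Nat.cast_nonneg n) E.lam_pos.le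
  linarith

lemma PingPair.far (E : Ambient G X δ κ N lam n) (h : PingPair lam n p px py rx ry) {M : ℕ}
    (hM : (M : ℝ) = 10 ^ 7 * (n + 1)) :
    2600000 * ((n + 1) * lam) ≤ dist (rx ^ M • p) p := by
  have h1 := h.tx.growth E M
  have h2 := disp_base E.act (rx ^ M) px p
  have := h.dx
  have : 0 ≤ n * lam := mul_nonneg (Nat.cast_nonneg n) E.lam_pos.le
  have := E.lam_pos
  rw [hM] at h1
  linarith

lemma PingPair.step (E : Ambient G X δ κ N lam n) (h : PingPair lam n p px py rx ry) :
    dist (rx • p) p ≤ 4 * lam := by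
  have h2 := disp_base E.act rx p px
  have := h.dx
  have := h.tx.upper
  rw [dist_comm p px] at h2
  linarith

/-- An element commuting with powers of both translations moves `p` by a bounded amount. -/
lemma PingPair.bounded (E : Ambient G X δ κ N lam n) (h : PingPair lam n p px py rx ry) {s : G}
    {J : ℕ} (hJ : 1 ≤ J) (hx : s * rx ^ J * s⁻¹ = rx ^ J) (hy : s * ry ^ J * s⁻¹ = ry ^ J) :
    dist (s • p) p ≤ 1300 * ((n + 1) * lam) := by
  obtain ⟨l, hl⟩ := close_of_normalizes E.hyp E.pos E.act h.tx.turn (h.tx.long E) hJ (Or.inl hx)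
  obtain ⟨l', hl'⟩ := close_of_normalizes E.hyp E.pos E.act h.ty.turn (h.ty.long E) hJ (Or.inl hy)
  have h1 := h.div l l'
  unfold gromov at h1
  have ux := h.tx.upper
  have uy := h.ty.upper
  have dx := h.dx
  have dy := h.dy
  have := E.dl
  have := E.lam_pos
  have : 0 ≤ n * lam := mul_nonneg (Nat.cast_nonneg n) E.lam_pos.le
  have t1 := dist_triangle4 (rx ^ l • px) (s • px) (s • py) (ry ^ l' • py)
  have t2 := dist_triangle_right px py p
  have t3 := dist_triangle4 (s • p) (s • px) (rx ^ l • px) p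
  have t4 : 0 ≤ dist (ry ^ l' • py) p := dist_nonneg
  rw [dist_comm (rx ^ l • px) (s • px), dist_act E.act] at t1
  rw [dist_act E.act, dist_comm p px] at t3
  linarith

variable {M : ℕ}

/-- The product `rx ^ M * ry ^ M` translates `p` a long way along a quasi-geodesic. -/
lemma PingPair.turn (E : Ambient G X δ κ N lam n) (h : PingPair lam n p px py rx ry)
    (hM : (M : ℝ) = 10 ^ 7 * (n + 1)) :
    gromov ((rx ^ M * ry ^ M) • p) ((rx ^ M * ry ^ M)⁻¹ • p) p ≤ 604 * ((n + 1) * lam) ∧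
    5000000 * ((n + 1) * lam) ≤ dist ((rx ^ M * ry ^ M) • p) p := by
  have fx := h.far E hM
  have fy := h.symm.far E hM
  have k1 := h.div' E (-M) M
  have k2 := h.div' E M (-M)
  rw [zpow_neg, zpow_natCast, zpow_natCast] at k1 k2
  have := E.dl
  have := E.pos
  have := E.lam_pos
  have : 0 ≤ n * lam := mul_nonneg (Nat.cast_nonneg n) E.lam_pos.le
  set x := rx ^ M
  set y := ry ^ M
  have a1 : gromov (x • p) ((x * y) • p) p = dist (x • p) p - gromov (x⁻¹ • p) (y • p) p := by
    rw [gromov_swap, ← gromov_act E.act x (x⁻¹ • p), smul_inv_smul, mul_smul]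
  have a2 : gromov (y⁻¹ • p) ((x * y)⁻¹ • p) p = dist (y • p) p - gromov (x⁻¹ • p) (y • p) p := by
    rw [gromov_swap, ← gromov_act E.act y⁻¹ (x⁻¹ • p), inv_smul_smul, mul_inv_rev, mul_smul,
      disp_inv E.act, gromov_comm p]
  constructor
  · rcases hyp_or E.hyp (x • p) ((x * y) • p) (y⁻¹ • p) p with h' | h'
    · linarith
    · rcases hyp_or E.hyp ((x * y) • p) ((x * y)⁻¹ • p) (y⁻¹ • p) p with h'' | h''
      · linarith
      · rw [gromov_comm _ (y⁻¹ • p)] at h''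
        linarith
  · have e : dist ((x * y) • p) p = dist (x⁻¹ • p) (y • p) := by
      rw [mul_smul, dist_act_inv E.act, dist_comm]
    rw [e]
    unfold gromov at k1
    rw [disp_inv E.act] at k1
    linarith

/-- An element which moves `p` moderately and almost preserves the direction of
`h = (rx ^ M * ry ^ M) ^ 10` belongs to the almost stabiliser of a segment of length `κ`; in
particular there are at most `N` of them. -/
lemma PingPair.count (E : Ambient G X δ κ N lam n) (h : PingPair lam n p px py rx ry)
    (hM : (M : ℝ) = 10 ^ 7 * (n + 1)) {J : ℕ} (hJ1 : 1 ≤ J)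
    (hJ : ∀ j, 1 ≤ j → j ≤ n → j ∣ J) :
    {s : G | dist (s • p) p ≤ 202 * ((n + 1) * lam) ∧
      0.4 * dist ((rx ^ M * ry ^ M) ^ 10 • p) p ≤
        gromov ((rx ^ M * ry ^ M) ^ 10 • p) (s • (rx ^ M * ry ^ M) ^ 10 • p) p}.Finite ∧
    ({s : G | dist (s • p) p ≤ 202 * ((n + 1) * lam) ∧
      0.4 * dist ((rx ^ M * ry ^ M) ^ 10 • p) p ≤
        gromov ((rx ^ M * ry ^ M) ^ 10 • p) (s • (rx ^ M * ry ^ M) ^ 10 • p) p}.ncard : ℝ) ≤ N := by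
  obtain ⟨tu, fh⟩ := h.turn E hM
  have fx := h.far E hM
  have fy := h.symm.far E hM
  have hδ := E.pos
  have hδl := E.dl
  have hlam := E.lam_pos
  have hκ := E.kl
  have hdk := E.dk
  have hnl : 0 ≤ n * lam := mul_nonneg (Nat.cast_nonneg n) E.lam_pos.le
  have k1 := h.div' E (-M) M
  rw [zpow_neg, zpow_natCast, zpow_natCast] at k1
  obtain ⟨mu, hmu⟩ : ∃ mu : ℝ, mu = (n + 1) * lam := ⟨_, rfl⟩
  have hmu1 : n * lam + lam = mu := by rw [hmu]; ring
  have hbd : ∀ s : G, s * rx ^ J * s⁻¹ = rx ^ J → s * ry ^ J * s⁻¹ = ry ^ J →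
      dist (s • p) p ≤ 1300 * mu := fun s h1 h2 => by rw [hmu]; exact h.bounded E hJ1 h1 h2
  rw [← hmu] at tu fh fx fy k1 ⊢
  obtain ⟨z₁, z₂, hz, g1, g2, p1, q1, p2, q2⟩ :=
    exists_mid E.geo p (rx ^ M • p) (κ := κ) (by linarith) (by rw [dist_comm]; linarith)
  rw [dist_comm p (rx ^ M • p)] at p1 q1 p2 q2
  have hsub : {s : G | dist (s • p) p ≤ 202 * mu ∧
      0.4 * dist ((rx ^ M * ry ^ M) ^ 10 • p) p ≤
        gromov ((rx ^ M * ry ^ M) ^ 10 • p) (s • (rx ^ M * ry ^ M) ^ 10 • p) p} ⊆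
      {g : G | dist (g • z₁) z₁ ≤ 100 * δ ∧ dist (g • z₂) z₂ ≤ 100 * δ} := by
    rintro s ⟨s1, s2⟩
    have hx0 : ∀ s : G, dist (s • p) p ≤ 10800 * mu →
        dist (s • rx ^ M • p) (rx ^ M • p) ≤ 10800 * mu → s * rx ^ J * s⁻¹ = rx ^ J := by
      intro s h1 h2
      obtain ⟨j, j1, j2, hj⟩ := commute_of_fix E.hyp E.pos E.act E.geo (by linarith) E.acyl
        (n := n) (by linarith [E.hn]) (g := rx) (T := s) (p := p) (D := 10800 * mu) (M := M)
        (h.step E) h1 h2 (by rw [dist_comm]; linarith)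
      exact pow_conj_of_dvd (hJ j j1 j2) hj
    have hy0 : ∀ s : G, dist (s • p) p ≤ 10800 * mu →
        dist (s • ry ^ M • p) (ry ^ M • p) ≤ 10800 * mu → s * ry ^ J * s⁻¹ = ry ^ J := by
      intro s h1 h2
      obtain ⟨j, j1, j2, hj⟩ := commute_of_fix E.hyp E.pos E.act E.geo (by linarith) E.acyl
        (n := n) (by linarith [E.hn]) (g := ry) (T := s) (p := p) (D := 10800 * mu) (M := M)
        (h.symm.step E) h1 h2 (by rw [dist_comm]; linarith)
      exact pow_conj_of_dvd (hJ j j1 j2) hj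
    have hxJ : rx ^ M * rx ^ J = rx ^ J * rx ^ M := (Commute.pow_pow_self rx M J).eq
    set x := rx ^ M with hx
    set y := ry ^ M with hy
    set f := x * y with hf
    -- `s` almost fixes the intermediate point `f • p`
    have hlong : 2 * (604 * mu) + 10 * δ ≤ dist (f • p) p := by linarith
    have c1 := chain_between E.hyp E.pos E.act tu hlong (a := 0) (j := 1) (b := 10)
      (by omega) (by omega)
    have e10 : f ^ (10 : ℤ) = f ^ 10 := by norm_cast
    rw [zpow_zero, one_smul, zpow_one, e10] at c1
    have c2 := chain_growth E.hyp E.pos E.act tu hlong 10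
    push_cast at c2
    have c3 : dist (f • p) p - 605 * mu ≤ gromov (f • p) (f ^ 10 • p) p := by
      rw [gromov_swap]; linarith
    have c4 := gromov_move_base (s • f • p) (s • f ^ 10 • p) (s • p) p
    rw [gromov_act E.act] at c4
    have c5 : dist (f • p) p - 809 * mu ≤ gromov (f • p) (s • f • p) p := by
      rcases hyp_or E.hyp (f • p) (f ^ 10 • p) (s • f • p) p with h' | h'
      · linarith
      · rcases hyp_or E.hyp (f ^ 10 • p) (s • f ^ 10 • p) (s • f • p) p with h'' | h''
        · linarith
        · rw [gromov_comm _ (s • f • p)] at h''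
          linarith
    have c6 := dist_triangle (s • f • p) (s • p) p
    rw [dist_act E.act] at c6
    have c7 : dist (s • f • p) (f • p) ≤ 1900 * mu := by
      unfold gromov at c5
      rw [dist_comm]; linarith
    have hxq : gromov p (f • p) (x • p) ≤ 603 * mu := by
      rw [← gromov_act E.act x, smul_inv_smul, ← mul_smul] at k1
      exact k1
    have c8 := rough_act E.hyp E.act (D := 1900 * mu) (by linarith : dist (s • p) p ≤ 1900 * mu)
      c7 hxq
    have c8' : dist (s • x • p) (x • p) ≤ 10800 * mu := by linarith
    -- `s` commutes with a power of `rx`, and `x⁻¹ * s * x` with powers of `rx` and `ry`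
    have com1 : s * rx ^ J * s⁻¹ = rx ^ J := hx0 s (by linarith) c8'
    have com2 : (x⁻¹ * s * x) * rx ^ J * (x⁻¹ * s * x)⁻¹ = rx ^ J := by
      have e : (x⁻¹ * s * x) * rx ^ J * (x⁻¹ * s * x)⁻¹
          = x⁻¹ * (s * (x * rx ^ J * x⁻¹) * s⁻¹) * x := by group
      have e2 : x * rx ^ J * x⁻¹ = rx ^ J := by rw [hxJ]; group
      rw [e, e2, com1, mul_assoc, ← hxJ]; group
    have com3 : (x⁻¹ * s * x) * ry ^ J * (x⁻¹ * s * x)⁻¹ = ry ^ J := by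
      refine hy0 _ ?_ ?_
      · rw [mul_smul, mul_smul, dist_act_inv E.act]; exact c8'
      · rw [mul_smul, mul_smul, dist_act_inv E.act, ← mul_smul x y, ← hf]; linarith
    have powc : ∀ (r a : G) (i : ℕ), a * r * a⁻¹ = r → a ^ i * r * (a ^ i)⁻¹ = r := by
      intro r a i ha
      have hc : Commute a r := mul_inv_eq_iff_eq_mul.mp ha
      exact mul_inv_eq_iff_eq_mul.mpr (hc.pow_left i).eq
    have orb : ∀ z : X, ∀ i : ℕ, dist (s ^ i • z) z ≤ 1300 * mu + 2 * dist z (x • p) := by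
      intro z i
      have h1 := hbd ((x⁻¹ * s * x) ^ i) (powc _ _ i com2) (powc _ _ i com3)
      have e : (x⁻¹ * s * x) ^ i = x⁻¹ * s ^ i * x := by
        have := conj_pow (a := x⁻¹) (b := s) (i := i)
        rwa [inv_inv] at this
      rw [e, mul_smul, mul_smul, dist_act_inv E.act] at h1
      have h2 := disp_base E.act (s ^ i) z (x • p)
      linarith
    constructor
    · exact small_of_bounded E.hyp E.pos E.act (by linarith : dist (s • p) p ≤ 10800 * mu) c8' g1
        (by linarith) (by linarith) (orb z₁)
    · exact small_of_bounded E.hyp E.pos E.act (by linarith : dist (s • p) p ≤ 10800 * mu) c8' g2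
        (by linarith) (by linarith) (orb z₂)
  obtain ⟨hfin, hc⟩ := E.acyl z₁ z₂ hz.ge
  refine ⟨hfin.subset hsub, le_trans ?_ hc⟩
  exact_mod_cast Set.ncard_le_ncard hsub hfin

end PingPair

/-! ### Reduced sets of conjugates -/

section Reduced

variable {G X : Type*} [Group G] [MetricSpace X] [MulAction G X] {δ : ℝ}

/-- A graph of degree at most `d` on `V` has an independent set of size at least `|V|/(d+1)`. -/
lemma exists_independent {α : Type*} (V : Finset α) (r : α → α → Prop)
    (hs : ∀ a b, r a b → r b a) {d : ℕ} (hd : ∀ v ∈ V, {w | w ∈ V ∧ r v w}.ncard ≤ d) :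
    ∃ V' ⊆ V, (∀ a ∈ V', ∀ b ∈ V', a ≠ b → ¬ r a b) ∧ V.card ≤ (d + 1) * V'.card := by
  classical
  obtain ⟨V', hV', hmax⟩ := Finset.exists_max_image
    (V.powerset.filter fun T => ∀ a ∈ T, ∀ b ∈ T, a ≠ b → ¬ r a b) Finset.card
    ⟨∅, by simp⟩
  simp only [Finset.mem_filter, Finset.mem_powerset] at hV' hmax
  refine ⟨V', hV'.1, hV'.2, ?_⟩
  have hsub : V ⊆ V'.biUnion fun v => insert v (V.filter fun w => r v w) := by
    intro w hw
    by_contra hcon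
    simp only [Finset.mem_biUnion, Finset.mem_insert, Finset.mem_filter, not_exists, not_and,
      not_or] at hcon
    have hwn : w ∉ V' := fun h => (hcon w h).1 rfl
    have := hmax (insert w V') ⟨Finset.insert_subset hw hV'.1, by
      intro a ha b hb hab
      rw [Finset.mem_insert] at ha hb
      rcases ha with rfl | ha <;> rcases hb with rfl | hb
      · exact absurd rfl hab
      · exact fun h => (hcon b hb).2 hw (hs _ _ h)
      · exact (hcon a ha).2 hw
      · exact hV'.2 a ha b hb hab⟩
    rw [Finset.card_insert_of_notMem hwn] at this
    omega
  have h1 := Finset.card_le_card hsub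
  have h2 := Finset.card_biUnion_le_card_mul V' (fun v => insert v (V.filter fun w => r v w))
    (d + 1) (by
      intro v hv
      refine (Finset.card_insert_le _ _).trans (Nat.succ_le_succ ?_)
      have := hd v (hV'.1 hv)
      rw [← Set.ncard_coe_finset]
      simpa using this)
  rw [mul_comm]
  exact h1.trans h2

/-- Two conjugates of `k` that both point in the direction of `a` are conjugate to each other by an
element almost fixing the initial segment of `[p, kp]`. -/
lemma almost_fix (hh : IsDeltaHyperbolic X δ) (hi : IsometricAction G X) {p a : X} {k w w₀ : G}
    {R c : ℝ} (hw : dist (w • p) p ≤ R) (hw₀ : dist (w₀ • p) p ≤ R)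
    (h : c ≤ gromov a ((w * k * w⁻¹) • p) p) (h₀ : c ≤ gromov a ((w₀ * k * w₀⁻¹) • p) p) :
    c - δ - 3 * R ≤ gromov (k • p) ((w₀⁻¹ * w) • k • p) p := by
  have e : ∀ w : G, dist (w • p) p ≤ R → dist ((w * k * w⁻¹) • p) (w • k • p) ≤ R := by
    intro w hw
    rw [mul_smul, mul_smul, dist_act hi, dist_act hi, disp_inv hi]
    exact hw
  have h1 := e w hw
  have h2 := e w₀ hw₀
  have m1 := gromov_move_left ((w₀ * k * w₀⁻¹) • p) (w₀ • k • p) ((w * k * w⁻¹) • p) p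
  have m2 := gromov_move_right (w₀ • k • p) ((w * k * w⁻¹) • p) (w • k • p) p
  have m3 := gromov_move_base (w₀ • k • p) (w • k • p) p (w₀ • p)
  rw [dist_comm p] at m3
  have m4 : gromov (w₀ • k • p) (w • k • p) (w₀ • p) =
      gromov (k • p) ((w₀⁻¹ * w) • k • p) p := by
    rw [← gromov_act hi w₀ (k • p), mul_smul w₀⁻¹, smul_inv_smul]
  rcases hyp_or hh ((w₀ * k * w₀⁻¹) • p) a ((w * k * w⁻¹) • p) p with h' | h'
  · rw [gromov_comm] at h'
    linarith
  · linarith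

/-- If few elements almost fix a long initial segment of `[p, h^{±1}p]`, then a positive proportion
of the conjugates of `h` by a set `V` of elements moving `p` little form a reduced set: a conflict
between two conjugates produces such an element, so the conflict graph has bounded degree. -/
lemma exists_reduced (hh : IsDeltaHyperbolic X δ) (hi : IsometricAction G X) (hδ : 0 < δ)
    {p : X} {h : G} {mu : ℝ} {n : ℕ} (V : Finset G) (hmu : 1000 * δ ≤ mu)
    (hV : ∀ v ∈ V, dist (v • p) p ≤ 101 * mu) (hH : 40000000 * mu ≤ dist (h • p) p)
    (hturn : gromov (h • p) (h⁻¹ • p) p ≤ 606 * mu)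
    (hcount : ∀ k, k = h ∨ k = h⁻¹ →
      {s : G | dist (s • p) p ≤ 202 * mu ∧
        0.4 * dist (k • p) p ≤ gromov (k • p) (s • k • p) p}.Finite ∧
      {s : G | dist (s • p) p ≤ 202 * mu ∧
        0.4 * dist (k • p) p ≤ gromov (k • p) (s • k • p) p}.ncard ≤ n) :
    ∃ S : Set G, (∀ s ∈ S, ∃ v ∈ V, s = v * h * v⁻¹) ∧ S.Finite ∧ ReducedAt δ (200 * δ) S p ∧
      V.card ≤ (4 * n + 1) * S.ncard := by
  classical
  have hk : ∀ k, k = h ∨ k = h⁻¹ → dist (k • p) p = dist (h • p) p := by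
    rintro k (rfl | rfl)
    · rfl
    · exact disp_inv hi _ _
  have hlen : ∀ k, k = h ∨ k = h⁻¹ → ∀ v ∈ V,
      dist (h • p) p - 202 * mu ≤ dist ((v * k * v⁻¹) • p) p := by
    intro k hk' v hv
    have e : dist ((v * k * v⁻¹) • p) p = dist (k • v⁻¹ • p) (v⁻¹ • p) := by
      rw [mul_smul, mul_smul, ← dist_act hi v⁻¹ _ p, inv_smul_smul]
    have := disp_base hi k p (v⁻¹ • p)
    rw [dist_comm p, disp_inv hi, ← e, hk k hk'] at this
    have := hV v hv
    linarith
  let conf : G → G → G → G → Prop := fun k₁ k₂ v w =>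
    min (dist ((v * k₁ * v⁻¹) • p) p) (dist ((w * k₂ * w⁻¹) • p) p) / 2 - 250 * δ ≤
      gromov ((v * k₁ * v⁻¹) • p) ((w * k₂ * w⁻¹) • p) p
  have hdeg : ∀ k₁, k₁ = h ∨ k₁ = h⁻¹ → ∀ k₂, k₂ = h ∨ k₂ = h⁻¹ → ∀ v ∈ V,
      {w | w ∈ V ∧ conf k₁ k₂ v w}.ncard ≤ n := by
    intro k₁ h₁ k₂ h₂ v hv
    rcases Set.eq_empty_or_nonempty {w | w ∈ V ∧ conf k₁ k₂ v w} with he | ⟨w₀, hw₀⟩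
    · rw [he]; simp
    refine le_trans ?_ (hcount k₂ h₂).2
    refine Set.ncard_le_ncard_of_injOn (fun w => w₀⁻¹ * w) ?_
      (fun a _ b _ hab => mul_left_cancel hab) (hcount k₂ h₂).1
    have hc : ∀ w, w ∈ V ∧ conf k₁ k₂ v w → dist (h • p) p / 2 - 101 * mu - 250 * δ ≤
        gromov ((v * k₁ * v⁻¹) • p) ((w * k₂ * w⁻¹) • p) p := by
      rintro w ⟨hw, hcw⟩
      have := le_min (hlen k₁ h₁ v hv) (hlen k₂ h₂ w hw)
      simp only [conf] at hcw
      linarith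
    intro w hw
    have hf := almost_fix hh hi (hV w hw.1) (hV w₀ hw₀.1) (hc w hw) (hc w₀ hw₀)
    refine ⟨?_, ?_⟩
    · show dist ((w₀⁻¹ * w) • p) p ≤ _
      have := disp_mul hi w₀⁻¹ w p
      rw [disp_inv hi] at this
      linarith [hV w hw.1, hV w₀ hw₀.1]
    · show _ ≤ gromov (k₂ • p) ((w₀⁻¹ * w) • k₂ • p) p
      rw [hk k₂ h₂]
      linarith
  obtain ⟨V', hV', hind, hcard⟩ := exists_independent V
    (fun v w => conf h h v w ∨ conf h h⁻¹ v w ∨ conf h⁻¹ h v w ∨ conf h⁻¹ h⁻¹ v w)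
    (by
      intro v w
      have hs : ∀ k₁ k₂, conf k₁ k₂ v w → conf k₂ k₁ w v := by
        intro k₁ k₂ hc
        simp only [conf] at hc ⊢
        rw [min_comm, gromov_comm]; exact hc
      rintro (hc | hc | hc | hc)
      · exact Or.inl (hs _ _ hc)
      · exact Or.inr (Or.inr (Or.inl (hs _ _ hc)))
      · exact Or.inr (Or.inl (hs _ _ hc))
      · exact Or.inr (Or.inr (Or.inr (hs _ _ hc)))) (d := 4 * n)
    (by
      intro v hv
      have e : {w | w ∈ V ∧ (conf h h v w ∨ conf h h⁻¹ v w ∨ conf h⁻¹ h v w ∨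
          conf h⁻¹ h⁻¹ v w)} = {w | w ∈ V ∧ conf h h v w} ∪ ({w | w ∈ V ∧ conf h h⁻¹ v w} ∪
          ({w | w ∈ V ∧ conf h⁻¹ h v w} ∪ {w | w ∈ V ∧ conf h⁻¹ h⁻¹ v w})) := by
        ext w
        simp only [Set.mem_union, Set.mem_ofPred_eq]
        tauto
      rw [e]
      have a1 := hdeg h (Or.inl rfl) h (Or.inl rfl) v hv
      have a2 := hdeg h (Or.inl rfl) h⁻¹ (Or.inr rfl) v hv
      have a3 := hdeg h⁻¹ (Or.inr rfl) h (Or.inl rfl) v hv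
      have a4 := hdeg h⁻¹ (Or.inr rfl) h⁻¹ (Or.inr rfl) v hv
      have b1 := Set.ncard_union_le {w | w ∈ V ∧ conf h h v w} ({w | w ∈ V ∧ conf h h⁻¹ v w} ∪
          ({w | w ∈ V ∧ conf h⁻¹ h v w} ∪ {w | w ∈ V ∧ conf h⁻¹ h⁻¹ v w}))
      have b2 := Set.ncard_union_le {w | w ∈ V ∧ conf h h⁻¹ v w}
          ({w | w ∈ V ∧ conf h⁻¹ h v w} ∪ {w | w ∈ V ∧ conf h⁻¹ h⁻¹ v w})
      have b3 := Set.ncard_union_le {w | w ∈ V ∧ conf h⁻¹ h v w}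
        {w | w ∈ V ∧ conf h⁻¹ h⁻¹ v w}
      omega)
  have key : ∀ k₁, k₁ = h ∨ k₁ = h⁻¹ → ∀ k₂, k₂ = h ∨ k₂ = h⁻¹ → ∀ v ∈ V', ∀ w ∈ V',
      (v ≠ w ∨ k₁ ≠ k₂) → gromov ((v * k₁ * v⁻¹) • p) ((w * k₂ * w⁻¹) • p) p <
      min (dist ((v * k₁ * v⁻¹) • p) p) (dist ((w * k₂ * w⁻¹) • p) p) / 2 - 200 * δ - 50 * δ := by
    intro k₁ h₁ k₂ h₂ v hv w hw hne
    by_cases hvw : v = w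
    · subst hvw
      have hk' := hne.resolve_left (fun h => h rfl)
      have ht : gromov (k₁ • p) (k₂ • p) p ≤ 606 * mu := by
        rcases h₁ with rfl | rfl <;> rcases h₂ with rfl | rfl
        · exact absurd rfl hk'
        · exact hturn
        · rw [gromov_comm]; exact hturn
        · exact absurd rfl hk'
      have hvp := hV v (hV' hv)
      have e : ∀ k : G, dist ((v * k * v⁻¹) • p) (v • k • p) ≤ 101 * mu := by
        intro k
        rw [mul_smul, mul_smul, dist_act hi, dist_act hi, disp_inv hi]
        exact hvp
      have m1 := gromov_move_left ((v * k₁ * v⁻¹) • p) (v • k₁ • p) ((v * k₂ * v⁻¹) • p) p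
      have m2 := gromov_move_right (v • k₁ • p) ((v * k₂ * v⁻¹) • p) (v • k₂ • p) p
      have m3 := gromov_move_base (v • k₁ • p) (v • k₂ • p) p (v • p)
      rw [gromov_act hi, dist_comm p] at m3
      have := le_min (hlen k₁ h₁ v (hV' hv)) (hlen k₂ h₂ v (hV' hv))
      have := e k₁
      have := e k₂
      linarith
    · have := hind v hv w hw hvw
      have hn : ¬ conf k₁ k₂ v w := by
        intro hc
        rcases h₁ with rfl | rfl <;> rcases h₂ with rfl | rfl
        · exact this (Or.inl hc)
        · exact this (Or.inr (Or.inl hc))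
        · exact this (Or.inr (Or.inr (Or.inl hc)))
        · exact this (Or.inr (Or.inr (Or.inr hc)))
      simp only [conf, not_le] at hn
      linarith
  have hself : ∀ x : X, ¬ gromov x x p < min (dist x p) (dist x p) / 2 - 200 * δ - 50 * δ := by
    intro x hx
    rw [gromov_self_eq, min_self] at hx
    have : 0 ≤ dist x p := dist_nonneg
    linarith
  have hne : h ≠ h⁻¹ := by
    intro e
    rw [← e, gromov_self_eq] at hturn
    linarith
  have hinj : Set.InjOn (fun v : G => v * h * v⁻¹) V' := by
    intro v hv w hw hvw
    by_contra hcon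
    have := key h (Or.inl rfl) h (Or.inl rfl) v hv w hw (Or.inl hcon)
    simp only at hvw
    rw [hvw] at this
    exact hself _ this
  refine ⟨(fun v : G => v * h * v⁻¹) '' V', ?_, V'.finite_toSet.image _, ⟨?_, ?_⟩, ?_⟩
  · rintro s ⟨v, hv, rfl⟩
    exact ⟨v, hV' hv, rfl⟩
  · rw [Set.eq_empty_iff_forall_notMem]
    rintro s ⟨⟨v, hv, rfl⟩, ⟨w, hw, hvw⟩⟩
    have e : v * h * v⁻¹ = w * h⁻¹ * w⁻¹ := by
      simp only at hvw
      rw [← inv_inj, ← hvw]; group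
    have := key h (Or.inl rfl) h⁻¹ (Or.inr rfl) v hv w hw (Or.inr hne)
    rw [← e] at this
    exact hself _ this
  · have hmem : ∀ u ∈ ((fun v : G => v * h * v⁻¹) '' V') ∪ ((fun v : G => v * h * v⁻¹) '' V')⁻¹,
        ∃ k, (k = h ∨ k = h⁻¹) ∧ ∃ v ∈ V', u = v * k * v⁻¹ := by
      rintro u (⟨v, hv, rfl⟩ | ⟨v, hv, hu⟩)
      · exact ⟨h, Or.inl rfl, v, hv, rfl⟩
      · refine ⟨h⁻¹, Or.inr rfl, v, hv, ?_⟩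
        simp only at hu
        rw [← inv_inj, ← hu]; group
    intro u₁ hu₁ u₂ hu₂ hne'
    obtain ⟨k₁, h₁, v, hv, rfl⟩ := hmem u₁ hu₁
    obtain ⟨k₂, h₂, w, hw, rfl⟩ := hmem u₂ hu₂
    refine key k₁ h₁ k₂ h₂ v hv w hw ?_
    by_contra hcon
    push Not at hcon
    exact hne' (by rw [hcon.1, hcon.2])
  · rw [hinj.ncard_image, Set.ncard_coe_finset]
    exact hcard

/-- Reduced sets freely generate: the sets of points seen from `p` in the direction of `sp`, for
`s` in `S ∪ S⁻¹`, are disjoint and play ping-pong. -/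
lemma ReducedAt.injective (hh : IsDeltaHyperbolic X δ) (hi : IsometricAction G X) (hδ : 0 < δ)
    {S : Set G} {p : X} (hS : ReducedAt δ (200 * δ) S p) [Nontrivial S] :
    Function.Injective (FreeGroup.lift (Subtype.val : S → G)) := by
  let D : G → Set X := fun s => {z | dist (s • p) p / 2 ≤ gromov (s • p) z p}
  have hdisj : ∀ s ∈ S ∪ S⁻¹, ∀ t ∈ S ∪ S⁻¹, s ≠ t → Disjoint (D s) (D t) := by
    intro s hs t ht hst
    rw [Set.disjoint_left]
    intro z hz hz'
    have h1 := hS.2 s hs t ht hst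
    simp only [D, Set.mem_ofPred_eq] at hz hz'
    have a := min_le_left (dist (s • p) p) (dist (t • p) p)
    have b := min_le_right (dist (s • p) p) (dist (t • p) p)
    rcases hyp_or hh (s • p) z (t • p) p with h' | h'
    · linarith
    · rw [gromov_comm] at h'
      linarith
  have hplay : ∀ s : G, s • (D s⁻¹)ᶜ ⊆ D s := by
    rintro s _ ⟨z, hz, rfl⟩
    simp only [D, Set.mem_compl_iff, Set.mem_ofPred_eq, not_le] at hz ⊢
    have e : gromov (s • p) (s • z) p = dist (s • p) p - gromov (s⁻¹ • p) z p := by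
      rw [gromov_swap, ← gromov_act hi s (s⁻¹ • p), smul_inv_smul]
    rw [disp_inv hi] at hz
    rw [e]
    linarith
  have hmem : ∀ s : S, (s : G) ∈ S ∪ S⁻¹ ∧ (s : G)⁻¹ ∈ S ∪ S⁻¹ := fun s =>
    ⟨Or.inl s.2, Or.inr (by simp)⟩
  have hne : ∀ s t : S, (s : G) ≠ (t : G)⁻¹ := by
    intro s t e
    have : (s : G) ∈ S ∩ S⁻¹ := ⟨s.2, by rw [e]; simp⟩
    rw [hS.1] at this
    exact this
  refine FreeGroup.injective_lift_of_ping_pong (fun s : S => (s : G)) (fun s => D s)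
    (fun s => D (s : G)⁻¹) ?_ ?_ ?_ ?_ ?_ ?_
  · intro s
    refine ⟨(s : G) • p, ?_⟩
    simp only [D, Set.mem_ofPred_eq]
    rw [gromov_self_eq]
    have : 0 ≤ dist ((s : G) • p) p := dist_nonneg
    linarith
  · intro s t hst
    exact hdisj _ (hmem s).1 _ (hmem t).1 (fun e => hst (Subtype.ext e))
  · intro s t hst
    exact hdisj _ (hmem s).2 _ (hmem t).2 (fun e => hst (Subtype.ext (inv_injective e)))
  · intro s t
    exact hdisj _ (hmem s).1 _ (hmem t).2 (hne s t)
  · intro s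
    exact hplay s
  · intro s
    have := hplay (s : G)⁻¹
    rw [inv_inv] at this
    exact this

end Reduced

/-! ### Reduced sets from a set of large energy -/

section Large

variable {G X : Type*} [Group G] [MetricSpace X] [MulAction G X] {δ κ N lam : ℝ} {n : ℕ}

lemma disp_le_of_mem_pow (hi : IsometricAction G X) {W : Set G} {p : X} {c : ℝ}
    (hW : ∀ w ∈ W, dist (w • p) p ≤ c) (k : ℕ) : ∀ v ∈ W ^ k, dist (v • p) p ≤ k * c := by
  induction k with
  | zero =>
    intro v hv
    rw [pow_zero, Set.mem_one] at hv
    simp [hv]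
  | succ k ih =>
    intro v hv
    rw [pow_succ, Set.mem_mul] at hv
    obtain ⟨a, ha, b, hb, rfl⟩ := hv
    have := disp_mul hi a b p
    have := ih a ha
    have := hW b hb
    push_cast
    linarith

/-- Two translations `g` and `t g t⁻¹` whose axes do not coincide. -/
lemma pingPair_conj (E : Ambient G X δ κ N lam n) {g t : G} {p : X} (hg : Translates lam g p)
    (ht : dist (t • p) p ≤ lam) {J : ℕ} (hJ : ∀ j, 1 ≤ j → j ≤ n → j ∣ J)
    (h1 : t * g ^ J * t⁻¹ ≠ g ^ J) (h2 : t * g ^ J * t⁻¹ ≠ (g ^ J)⁻¹) :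
    PingPair lam n p p (t • p) g (t * g * t⁻¹) := by
  refine ⟨by rw [dist_self]; exact E.lam_pos.le, ht, hg, hg.conj E.act t, fun l l' => ?_⟩
  have e : (t * g * t⁻¹) ^ l' • t • p = t • g ^ l' • p := by
    rw [conj_zpow, ← mul_smul, ← mul_smul]; congr 1; group
  rw [e]
  exact diverge E hg ht hJ h1 h2 l l'

/-- If `W` has large energy and contains a generating set of a group which is not virtually cyclic,
some short product `h` of elements of `W` has many conjugates forming a reduced set. -/
lemma exists_conjugates (hh : IsDeltaHyperbolic X δ) (hδ : 0 < δ) (hi : IsometricAction G X)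
    (hgeo : IsGeodesicSpace X) (hδκ : δ ≤ κ) (ha : AcylindricalAction G X δ κ N) (hn : N < n)
    {U W : Set G} (hW : W.Finite) (hne : W.Nonempty) (hsym : W⁻¹ = W) (hUW : U ⊆ W)
    (hWU : W ⊆ Subgroup.closure U) (hvc : ¬ VirtuallyCyclic (Subgroup.closure U)) {p : X}
    (hp : energyAt W p < energy X W + δ) (hbig : 10000 * κ ≤ energyAt W p) (V : Finset G)
    (hV : ∀ v ∈ V, dist (v • p) p ≤ 101 * ((n + 1) * energyAt W p)) {M : ℕ}
    (hM : (M : ℝ) = 10 ^ 7 * (n + 1)) :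
    ∃ h ∈ W ^ (40 * M + 20), ∃ S : Set G, (∀ s ∈ S, ∃ v ∈ V, s = v * h * v⁻¹) ∧ S.Finite ∧
      ReducedAt δ (200 * δ) S p ∧ V.card ≤ (4 * n + 1) * S.ncard := by
  obtain ⟨lam, hlam⟩ : ∃ lam, lam = energyAt W p := ⟨_, rfl⟩
  obtain ⟨g, hgW, turn, lower, upper⟩ := exists_lox hh hδ hi hgeo hW hne hsym hp (by linarith)
  have hmove : ∀ w ∈ W, dist (w • p) p ≤ lam := fun w hw => hlam ▸ disp_le_energyAt hW hw p
  rw [← hlam] at hbig hV turn lower upper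
  have E : Ambient G X δ κ N lam n := ⟨hh, hδ, hi, hgeo, ha, hδκ, hbig, hn⟩
  have hg : Translates lam g p := ⟨turn, lower, upper⟩
  have hgU : g ∈ Subgroup.closure U := by
    rw [pow_two, Set.mem_mul] at hgW
    obtain ⟨a, ha, b, hb, rfl⟩ := hgW
    exact mul_mem (hWU ha) (hWU hb)
  obtain ⟨J, hJdef⟩ : ∃ J, J = n.factorial := ⟨_, rfl⟩
  have hJ1 : 1 ≤ J := hJdef ▸ Nat.factorial_pos n
  have hJ : ∀ j, 1 ≤ j → j ≤ n → j ∣ J := fun j j1 j2 =>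
    hJdef ▸ Nat.dvd_factorial j1 j2
  obtain ⟨t, htU, h1, h2⟩ : ∃ t ∈ U, t * g ^ J * t⁻¹ ≠ g ^ J ∧ t * g ^ J * t⁻¹ ≠ (g ^ J)⁻¹ := by
    by_contra hcon
    push Not at hcon
    refine hvc (virtuallyCyclic_of_normalizes hh hδ hi hgeo (by linarith) ha hg.turn (hg.long E)
      hJ1 hgU ?_)
    intro t ht
    by_cases h : t * g ^ J * t⁻¹ = g ^ J
    · exact Or.inl h
    · exact Or.inr (hcon t ht h)
  have ht := hmove t (hUW htU)
  have P := pingPair_conj E hg ht hJ h1 h2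
  have tW : t ∈ W := hUW htU
  have tW' : t⁻¹ ∈ W := by rw [← hsym]; simpa using tW
  have hf : g ^ M * (t * g * t⁻¹) ^ M ∈ W ^ (4 * M + 2) := by
    have h3 : g ^ M ∈ W ^ (2 * M) := by rw [pow_mul]; exact Set.pow_mem_pow hgW
    rw [conj_pow]
    have e : W ^ (4 * M + 2) = W ^ (2 * M) * (W * W ^ (2 * M) * W) := by
      rw [← pow_succ', ← pow_succ, ← pow_add]; congr 1; omega
    rw [e]
    exact Set.mul_mem_mul h3 (Set.mul_mem_mul (Set.mul_mem_mul tW h3) tW')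
  obtain ⟨tu, fl⟩ := P.turn E hM
  have c1 := P.count E hM hJ1 hJ
  have c2 := (P.inv hi).symm.count E hM hJ1 hJ
  have einv : ((t * g * t⁻¹)⁻¹ ^ M * g⁻¹ ^ M) ^ 10 = ((g ^ M * (t * g * t⁻¹) ^ M) ^ 10)⁻¹ := by
    rw [inv_pow, inv_pow, ← mul_inv_rev, inv_pow]
  rw [einv] at c2
  have hl := E.dl
  have hlp := E.lam_pos
  have hnl : 0 ≤ n * lam := mul_nonneg (Nat.cast_nonneg n) hlp.le
  obtain ⟨mu, hmu⟩ : ∃ mu : ℝ, mu = (n + 1) * lam := ⟨_, rfl⟩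
  have hmu1 : n * lam + lam = mu := by rw [hmu]; ring
  rw [← hmu] at tu fl c1 c2 hV
  obtain ⟨f, hfdef⟩ : ∃ f, f = g ^ M * (t * g * t⁻¹) ^ M := ⟨_, rfl⟩
  rw [← hfdef] at tu fl c1 c2 hf
  have hlong : 2 * (604 * mu) + 10 * δ ≤ dist (f • p) p := by linarith
  have k1 := chain_growth hh hδ hi tu hlong 10
  push_cast at k1
  have k2 := chain_int hh hδ hi tu hlong (a := -10) (b := 10) (by norm_num) (by norm_num)
  have e10 : f ^ (10 : ℤ) = f ^ 10 := by norm_cast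
  rw [zpow_neg, e10, gromov_comm] at k2
  have toNat : ∀ c : ℕ, (c : ℝ) ≤ N → c ≤ n := fun c hc => by
    have : (c : ℝ) < n := by linarith
    exact_mod_cast this.le
  refine ⟨f ^ 10, ?_, exists_reduced hh hi hδ V (by linarith) hV (by linarith) (by linarith) ?_⟩
  · have : 40 * M + 20 = (4 * M + 2) * 10 := by ring
    rw [this, pow_mul]
    exact Set.pow_mem_pow hf
  · rintro k (rfl | rfl)
    · exact ⟨c1.1, toNat _ c1.2⟩
    · exact ⟨c2.1, toNat _ c2.2⟩

end Large

/-! ### Powers of a symmetric generating set -/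

section Powers

variable {G X : Type*} [Group G] [MetricSpace X] [MulAction G X] {δ κ N : ℝ} {U : Set G}

lemma finite_pow (hfin : U.Finite) (l : ℕ) : (U ^ l).Finite := by
  induction l with
  | zero => rw [pow_zero]; exact Set.finite_one
  | succ l ih => rw [pow_succ]; exact ih.mul hfin

lemma pow_subset_of_eq (hne : U.Nonempty) (hsym : U⁻¹ = U) {a b c : ℕ} (h : a + 2 * b = c) :
    U ^ a ⊆ U ^ c := by
  obtain ⟨u, hu⟩ := hne
  have h1 : (1 : G) ∈ U ^ 2 := by
    rw [pow_two, Set.mem_mul]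
    exact ⟨u, hu, u⁻¹, by rw [← hsym]; simpa using hu, by simp⟩
  have h2 : (1 : G) ∈ (U ^ 2) ^ b := by
    have := Set.pow_mem_pow (n := b) h1
    rwa [one_pow] at this
  intro v hv
  rw [← h, pow_add, pow_mul]
  exact Set.mem_mul.mpr ⟨v, hv, 1, h2, mul_one v⟩

lemma exists_mem_pow (hsym : U⁻¹ = U) {v : G} (hv : v ∈ Subgroup.closure U) :
    ∃ l : ℕ, v ∈ U ^ l := by
  induction hv using Subgroup.closure_induction with
  | mem x hx => exact ⟨1, by rwa [pow_one]⟩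
  | one => exact ⟨0, by simp⟩
  | mul x y _ _ hx hy =>
    obtain ⟨a, ha⟩ := hx
    obtain ⟨b, hb⟩ := hy
    exact ⟨a + b, by rw [pow_add]; exact Set.mul_mem_mul ha hb⟩
  | inv x _ hx =>
    obtain ⟨a, ha⟩ := hx
    refine ⟨a, ?_⟩
    rw [← hsym, inv_pow]
    simpa using ha

lemma pow_subset_closure (l : ℕ) : U ^ l ⊆ Subgroup.closure U := by
  induction l with
  | zero => simp [Set.one_subset, one_mem]
  | succ l ih =>
    rw [pow_succ]
    rintro _ ⟨a, ha, b, hb, rfl⟩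
    exact mul_mem (ih ha) (Subgroup.subset_closure hb)

/-- When the orbits are unbounded, no set of bounded displacement contains all odd powers. -/
lemma exists_odd_not_subset (hi : IsometricAction G X) (hne : U.Nonempty) (hsym : U⁻¹ = U) {x : X}
    (hunb : ∀ B : ℝ, ∃ v ∈ Subgroup.closure U, B < dist (v • x) x) {F : Set G} {B : ℝ}
    (hF : ∀ v ∈ F, dist (v • x) x ≤ B) : ∃ j : ℕ, ¬ U ^ (2 * j + 1) ⊆ F := by
  by_contra hcon
  push Not at hcon
  obtain ⟨u, hu⟩ := hne
  obtain ⟨v, hv, hB⟩ := hunb (B + dist (u • x) x)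
  have hd : (0 : ℝ) ≤ dist (u • x) x := dist_nonneg
  obtain ⟨l, hl⟩ := exists_mem_pow hsym hv
  rcases Nat.even_or_odd' l with ⟨j, rfl | rfl⟩
  · have h1 : v * u ∈ F := hcon j (by rw [pow_succ]; exact Set.mul_mem_mul hl hu)
    have h2 := hF _ h1
    have h3 := disp_mul hi (v * u) u⁻¹ x
    rw [disp_inv hi, mul_inv_cancel_right] at h3
    linarith
  · have := hF v (hcon j hl)
    linarith

/-- The odd powers grow at least linearly. -/
lemma card_odd (hi : IsometricAction G X) (hfin : U.Finite) (hne : U.Nonempty) (hsym : U⁻¹ = U)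
    {x : X} (hunb : ∀ B : ℝ, ∃ v ∈ Subgroup.closure U, B < dist (v • x) x) (j : ℕ) :
    j + 1 ≤ (U ^ (2 * j + 1)).ncard := by
  have hf : ∀ l : ℕ, (U ^ l).Finite := fun l => finite_pow hfin l
  induction j with
  | zero =>
    rw [mul_zero, zero_add, pow_one]
    exact (Set.ncard_pos hfin).mpr hne
  | succ j ih =>
    have hsub : U ^ (2 * j + 1) ⊆ U ^ (2 * (j + 1) + 1) :=
      pow_subset_of_eq hne hsym (b := 1) (by ring)
    suffices h : U ^ (2 * j + 1) ≠ U ^ (2 * (j + 1) + 1) from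
      ih.trans_lt (Set.ncard_lt_ncard (hsub.ssubset_of_ne h) (hf _))
    intro he
    have hstab : ∀ i, U ^ (2 * (j + i) + 1) = U ^ (2 * j + 1) := by
      intro i
      induction i with
      | zero => rfl
      | succ i ihi =>
        have e1 : 2 * (j + (i + 1)) + 1 = (2 * (j + i) + 1) + 2 := by ring
        have e2 : 2 * (j + 1) + 1 = (2 * j + 1) + 2 := by ring
        rw [e1, pow_add, ihi, ← pow_add, ← e2, ← he]
    obtain ⟨B, hB⟩ := ((hf (2 * j + 1)).image fun v => dist (v • x) x).bddAbove
    obtain ⟨i, hi'⟩ := exists_odd_not_subset hi hne hsym hunb (F := U ^ (2 * j + 1)) (B := B)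
      (fun v hv => hB ⟨v, hv, rfl⟩)
    refine hi' ?_
    rw [← hstab i]
    exact pow_subset_of_eq hne hsym (b := j) (by ring)

lemma energy_pow_le (hi : IsometricAction G X) (hfin : U.Finite) (q : X)
    {W : Set G} (k : ℕ) (hWne : W.Nonempty) (hW : W ⊆ U ^ k) :
    energy X W ≤ k * energyAt U q :=
  (energy_le W q).trans (energyAt_le hWne fun w hw =>
    disp_le_of_mem_pow hi (fun _ hu => disp_le_energyAt hfin hu q) k w (hW hw))

/-- The energy of the odd powers is unbounded: a large ball moving two points by a bounded amount
forces these points to be close to each other by acylindricity, so a bound on the energies would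
bound the orbits. -/
lemma exists_energy_gt (hh : IsDeltaHyperbolic X δ) (hδ : 0 < δ) (hi : IsometricAction G X)
    (hgeo : IsGeodesicSpace X) (hκ : 0 ≤ κ) (ha : AcylindricalAction G X δ κ N)
    (hfin : U.Finite) (hne : U.Nonempty) (hsym : U⁻¹ = U) {x : X}
    (hunb : ∀ B : ℝ, ∃ v ∈ Subgroup.closure U, B < dist (v • x) x) (T : ℝ) :
    ∃ j : ℕ, T < energy X (U ^ (2 * j + 1)) := by
  by_contra hcon
  push Not at hcon
  have : Nonempty X := ⟨x⟩
  have hf : ∀ l : ℕ, (U ^ l).Finite := fun l => finite_pow hfin l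
  have hq : ∀ j : ℕ, ∃ q : X, energyAt (U ^ (2 * j + 1)) q < T + 1 := fun j =>
    exists_energyAt_lt _ ((hcon j).trans_lt (by linarith))
  choose q hq using hq
  obtain ⟨n, hn⟩ := exists_nat_gt N
  obtain ⟨c, hc⟩ : ∃ c, c = countBound δ (T + 1) n := ⟨_, rfl⟩
  have hclose : ∀ j, c ≤ j → dist (q c) (q j) ≤ 10 * (T + 1 + κ + 100 * δ) := by
    intro j hj
    by_contra hfar
    push Not at hfar
    have h1 := card_le_countBound hh hδ hi hgeo hκ ha (n := n) (by linarith) hfar.le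
      (hf (2 * c + 1)).toFinset
      (fun v hv => (disp_le_energyAt (hf _) ((hf _).mem_toFinset.mp hv) _).trans (hq c).le)
      (fun v hv => (disp_le_energyAt (hf (2 * j + 1)) (pow_subset_of_eq hne hsym (b := j - c)
        (by omega) ((hf _).mem_toFinset.mp hv)) _).trans (hq j).le)
    have h2 := card_odd hi hfin hne hsym hunb c
    rw [Set.ncard_eq_toFinset_card _ (hf _)] at h2
    omega
  obtain ⟨j, hj⟩ := exists_odd_not_subset hi hne hsym hunb
    (F := {v | dist (v • x) x ≤ T + 1 + 2 * (10 * (T + 1 + κ + 100 * δ)) + 2 * dist x (q c)})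
    (fun v hv => hv)
  refine hj fun v hv => ?_
  have h1 : v ∈ U ^ (2 * (j + c) + 1) := pow_subset_of_eq hne hsym (b := c) (by ring) hv
  have h2 := (disp_le_energyAt (hf _) h1 (q (j + c))).trans (hq (j + c)).le
  have h3 := hclose (j + c) (by omega)
  have h4 := disp_base hi v (q c) (q (j + c))
  have h5 := disp_base hi v x (q c)
  show dist (v • x) x ≤ _
  linarith

end Powers

/-! ### Choice of the power and conclusion -/

section Scale

variable {G X : Type*} [Group G] [MetricSpace X] [MulAction G X] {δ κ N : ℝ} {U : Set G}

/-- The first odd power of `U` whose energy exceeds a given threshold `T = 2(2j₀+1)L` has energy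
comparable to `T`, and its exponent is at least `2j₀+1`. -/
lemma exists_scale (hh : IsDeltaHyperbolic X δ) (hδ : 0 < δ) (hi : IsometricAction G X)
    (hgeo : IsGeodesicSpace X) (hδκ : δ ≤ κ) (ha : AcylindricalAction G X δ κ N)
    (hfin : U.Finite) (hne : U.Nonempty) (hsym : U⁻¹ = U) {x : X}
    (hunb : ∀ B : ℝ, ∃ v ∈ Subgroup.closure U, B < dist (v • x) x) {L : ℝ}
    (hL : 10 ^ 4 * κ < L) (hUL : energy X U ≤ L) (j₀ : ℕ) :
    ∃ j, j₀ ≤ j ∧ ∃ p : X,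
      energyAt (U ^ (2 * j + 1)) p < energy X (U ^ (2 * j + 1)) + δ ∧
      L ≤ energyAt (U ^ (2 * j + 1)) p ∧
      energyAt (U ^ (2 * j + 1)) p ≤ 8 * (2 * j₀ + 1) * L := by
  classical
  have : Nonempty X := ⟨x⟩
  have hLδ : 10 ^ 4 * δ < L := by linarith
  have hj0 : (0 : ℝ) ≤ j₀ := Nat.cast_nonneg j₀
  have hj0L : 0 ≤ j₀ * L := mul_nonneg hj0 (by linarith)
  have hpne : ∀ l : ℕ, (U ^ l).Nonempty := fun l => hne.pow
  have hex := exists_energy_gt hh hδ hi hgeo (by linarith) ha hfin hne hsym hunb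
    (2 * (2 * j₀ + 1) * L)
  obtain ⟨j, hj, hmin⟩ : ∃ j, 2 * (2 * j₀ + 1) * L < energy X (U ^ (2 * j + 1)) ∧
      ∀ i, i < j → energy X (U ^ (2 * i + 1)) ≤ 2 * (2 * j₀ + 1) * L :=
    ⟨Nat.find hex, Nat.find_spec hex, fun i hi => not_lt.mp (Nat.find_min hex hi)⟩
  obtain ⟨q, hq⟩ := exists_energyAt_lt U (c := 2 * L) (by linarith : energy X U < 2 * L)
  have hjj : j₀ < j := by
    by_contra hcon
    push Not at hcon
    have h1 := energy_pow_le hi hfin q (2 * j + 1) (hpne _) subset_rfl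
    have h2 : ((2 * j + 1 : ℕ) : ℝ) * energyAt U q ≤ (2 * j₀ + 1) * (2 * L) := by
      refine mul_le_mul ?_ hq.le (energyAt_nonneg _ _) (by linarith)
      have : (j : ℝ) ≤ j₀ := by exact_mod_cast hcon
      push_cast
      linarith
    linarith
  obtain ⟨i, rfl⟩ : ∃ i, j = i + 1 := ⟨j - 1, by omega⟩
  have hi1 := hmin i (by omega)
  obtain ⟨r, hr⟩ := exists_energyAt_lt (U ^ (2 * i + 1)) (c := 2 * (2 * j₀ + 1) * L + δ)
    (by linarith : energy X (U ^ (2 * i + 1)) < 2 * (2 * j₀ + 1) * L + δ)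
  have h3 := energy_pow_le hi (finite_pow hfin (2 * i + 1)) r 3 (hpne (2 * (i + 1) + 1))
    (by rw [← pow_mul]; exact pow_subset_of_eq hne hsym (b := 2 * i) (by ring))
  push_cast at h3
  obtain ⟨p, hp⟩ := exists_energyAt_lt (U ^ (2 * (i + 1) + 1))
    (c := energy X (U ^ (2 * (i + 1) + 1)) + δ) (by linarith)
  have h4 := energy_le (U ^ (2 * (i + 1) + 1)) p
  refine ⟨i + 1, hjj.le, p, hp, by linarith, by linarith⟩

end Scale

/-- ping-pong in powers of `U`, the general case. -/
theorem pingpong_general :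
    ∀ N : ℝ, 0 < N →
    ∀ (G : Type u) [Group G] (X : Type v) [MetricSpace X] [MulAction G X],
    ∀ δ κ : ℝ, 0 < δ → δ ≤ κ →
      IsDeltaHyperbolic X δ → IsGeodesicSpace X →
      IsometricAction G X → AcylindricalAction G X δ κ N →
      ∀ L : ℝ, 10 ^ 4 * κ < L →
      ∀ U : Set G, U.Finite → U⁻¹ = U → energy X U ≤ L →
        (∃ x : X, ¬ Bornology.IsBounded
          ((fun g : G => g • x) '' ↑(Subgroup.closure U))) →
        ¬ VirtuallyCyclic (Subgroup.closure U) →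
        ∃ n : ℕ, (10 ^ 6 * (N + 1)) ^ 3 < (n : ℝ) ∧
        ∃ (S : Set G) (p : X),
          S ⊆ U ^ (10 ^ 7 * n) ∧
          ReducedAt δ (200 * δ) S p ∧
          ((U ^ n).ncard : ℝ) / (10 ^ 6 * (N + 1)) ^ 2 ≤ (S.ncard : ℝ) ∧
          energyAt S p ≤ 10 ^ 13 * (10 ^ 6 * (N + 1)) ^ 3 * L ∧
          10 ^ 6 * (N + 1) < (S.ncard : ℝ) ∧
          Function.Injective ⇑(FreeGroup.lift (Subtype.val : S → G)) := by
  intro N hN G _ X _ _ δ κ hδ hδκ hh hgeo hi ha L hL U hfin hsym hUL hx hvc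
  obtain ⟨x, hx⟩ := hx
  have hunb : ∀ B : ℝ, ∃ v ∈ Subgroup.closure U, B < dist (v • x) x := by
    by_contra hcon
    push Not at hcon
    obtain ⟨B, hB⟩ := hcon
    refine hx ((Metric.isBounded_iff_subset_closedBall x).mpr ⟨B, ?_⟩)
    rintro _ ⟨v, hv, rfl⟩
    exact hB v hv
  have hne : U.Nonempty := by
    rw [Set.nonempty_iff_ne_empty]
    rintro rfl
    obtain ⟨v, hv, hB⟩ := hunb 0
    rw [Subgroup.closure_empty, Subgroup.mem_bot] at hv
    rw [hv, one_smul, dist_self] at hB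
    exact lt_irrefl _ hB
  obtain ⟨C, hC⟩ : ∃ C : ℝ, C = 10 ^ 6 * (N + 1) := ⟨_, rfl⟩
  rw [← hC]
  have hC1 : 10 ^ 6 < C := by linarith
  have hC2 : C * 1 ≤ C ^ 2 := by
    rw [pow_two]; exact mul_le_mul_of_nonneg_left (by linarith) (by linarith)
  have hC3 : C ^ 2 * 10 ^ 6 ≤ C ^ 3 := by
    rw [pow_succ C 2]; exact mul_le_mul_of_nonneg_left (by linarith) (by positivity)
  -- `n₀` is an integer exceeding `N`, and `k` is odd
  obtain ⟨n₀, hn₀⟩ : ∃ n₀ : ℕ, n₀ = ⌊N⌋₊ + 1 := ⟨_, rfl⟩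
  have hNn : N < n₀ := by rw [hn₀]; push_cast; exact Nat.lt_floor_add_one N
  have hnN : (n₀ : ℝ) ≤ N + 1 := by
    rw [hn₀]; push_cast; linarith [Nat.floor_le hN.le]
  obtain ⟨k, hk⟩ : ∃ k : ℕ, k = 100 * (n₀ + 1) + 1 := ⟨_, rfl⟩
  have hkr : (k : ℝ) = 100 * (n₀ + 1) + 1 := by rw [hk]; push_cast; ring
  have hkpos : (0 : ℝ) < k := by rw [hkr]; linarith
  obtain ⟨M, hM⟩ : ∃ M : ℕ, M = 10000000 * (n₀ + 1) := ⟨_, rfl⟩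
  have hMr : (M : ℝ) = 10 ^ 7 * (n₀ + 1) := by rw [hM]; push_cast; norm_num
  obtain ⟨j₀, hj₀⟩ : ∃ j₀ : ℕ, j₀ = ⌈C ^ 3 / k⌉₊ := ⟨_, rfl⟩
  have hj₀l : C ^ 3 ≤ j₀ * k := by
    rw [← div_le_iff₀ hkpos, hj₀]; exact Nat.le_ceil _
  have hj₀u : (j₀ : ℝ) * k ≤ C ^ 3 + k := by
    have : (j₀ : ℝ) < C ^ 3 / k + 1 := by
      rw [hj₀]; exact Nat.ceil_lt_add_one (by positivity)
    have h2 := mul_le_mul_of_nonneg_right this.le hkpos.le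
    rwa [add_mul, one_mul, div_mul_cancel₀ _ hkpos.ne'] at h2
  obtain ⟨j, hjj, p, hp, hlow, hupp⟩ :=
    exists_scale hh hδ hi hgeo hδκ ha hfin hne hsym hunb hL hUL j₀
  obtain ⟨m, hm⟩ : ∃ m : ℕ, m = 2 * j + 1 := ⟨_, rfl⟩
  have hmr : (m : ℝ) = 2 * j + 1 := by rw [hm]; push_cast; ring
  rw [← hm] at hp hlow hupp
  have hWfin : (U ^ m).Finite := finite_pow hfin m
  have hVfin : (U ^ (m * k)).Finite := finite_pow hfin _
  have hWk : U ^ (m * k) = (U ^ m) ^ k := pow_mul U m k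
  have hmove := disp_le_of_mem_pow hi (W := U ^ m) (p := p)
    (fun w hw => disp_le_energyAt hWfin hw p)
  have hlam0 : 0 ≤ energyAt (U ^ m) p := energyAt_nonneg _ _
  have hVmove : ∀ v ∈ U ^ (m * k), dist (v • p) p ≤ k * energyAt (U ^ m) p := fun v hv =>
    hmove k v (hWk ▸ hv)
  have hκ : 0 < κ := by linarith
  obtain ⟨h, hhW, S, hSV, hSfin, hred, hcard⟩ := exists_conjugates hh hδ hi hgeo hδκ ha hNn
    (U := U) (W := U ^ m) hWfin hne.pow (by rw [← inv_pow, hsym])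
    (by
      have := pow_subset_of_eq hne hsym (a := 1) (b := j) (c := m) (by omega)
      rwa [pow_one] at this)
    (pow_subset_closure m) hvc hp (by linarith) hVfin.toFinset
    (by
      intro v hv
      refine (hVmove v (hVfin.mem_toFinset.mp hv)).trans ?_
      rw [← mul_assoc]
      refine mul_le_mul_of_nonneg_right ?_ hlam0
      rw [hkr]; linarith [(Nat.cast_nonneg n₀ : (0 : ℝ) ≤ n₀)]) hMr
  rw [← Set.ncard_eq_toFinset_card _ hVfin] at hcard
  have hcardr : ((U ^ (m * k)).ncard : ℝ) ≤ (4 * n₀ + 1) * S.ncard := by exact_mod_cast hcard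
  have hS0 : (0 : ℝ) ≤ S.ncard := Nat.cast_nonneg _
  have hcard' : ((U ^ (m * k)).ncard : ℝ) ≤ C * S.ncard :=
    hcardr.trans (mul_le_mul_of_nonneg_right (by linarith) hS0)
  have hjk : (j₀ : ℝ) * k ≤ j * k :=
    mul_le_mul_of_nonneg_right (by exact_mod_cast hjj) hkpos.le
  -- `m * k` is odd, so that `U ^ (m * k)` has more than `m * k / 2` elements
  have hgrow : (m : ℝ) * k / 2 < (U ^ (m * k)).ncard := by
    have e : m * k = 2 * (j * k + 50 * (n₀ + 1)) + 1 := by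
      rw [hm, add_mul, one_mul]; nth_rewrite 2 [hk]; ring
    have h1 := card_odd hi hfin hne hsym hunb (j * k + 50 * (n₀ + 1))
    rw [← e] at h1
    have h2 : ((j * k + 50 * (n₀ + 1) + 1 : ℕ) : ℝ) ≤ (U ^ (m * k)).ncard := by exact_mod_cast h1
    push_cast at h2
    rw [hmr, add_mul, one_mul]
    linarith
  have hbigS : C < (S.ncard : ℝ) := by
    by_contra hcon
    push Not at hcon
    have h1 : C * S.ncard ≤ C * C := mul_le_mul_of_nonneg_left hcon (by linarith)
    rw [hmr, add_mul] at hgrow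
    have h2 : 0 < C ^ 2 := by positivity
    rw [← pow_two] at h1
    linarith
  refine ⟨m * k, ?_, S, p, ?_, hred, ?_, ?_, hbigS, ?_⟩
  · push_cast
    rw [hmr, add_mul, one_mul]
    have : 0 < C ^ 3 := by positivity
    linarith
  · intro s hs
    obtain ⟨v, hv, rfl⟩ := hSV s hs
    rw [hVfin.mem_toFinset] at hv
    have hv' : v⁻¹ ∈ U ^ (m * k) := by
      rw [← hsym, inv_pow]; simpa using hv
    have h1 : v * h * v⁻¹ ∈ U ^ (m * k + m * (40 * M + 20) + m * k) := by
      rw [pow_add, pow_add, pow_mul U m (40 * M + 20)]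
      exact Set.mul_mem_mul (Set.mul_mem_mul hv hhW) hv'
    exact pow_subset_of_eq hne hsym (b := m * (299999900 * (n₀ + 1) + 4999989))
      (by rw [hM, hk]; ring) h1
  · rw [div_le_iff₀ (by positivity), mul_comm (S.ncard : ℝ)]
    exact hcard'.trans (mul_le_mul_of_nonneg_right (by linarith : C ≤ C ^ 2) hS0)
  · have hSne : S.Nonempty := by
      rw [← Set.ncard_pos hSfin]
      have : (0 : ℝ) < S.ncard := by linarith
      exact_mod_cast this
    refine energyAt_le hSne fun s hs => ?_
    obtain ⟨v, hv, rfl⟩ := hSV s hs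
    have hv1 := hVmove v (hVfin.mem_toFinset.mp hv)
    have hh1 := hmove _ h hhW
    have d1 := disp_mul hi (v * h) v⁻¹ p
    have d2 := disp_mul hi v h p
    rw [disp_inv hi] at d1
    push_cast at hh1
    have hkM : (40 * (M : ℝ) + 20) + 2 * k ≤ 5 * 10 ^ 6 * k := by rw [hMr, hkr]; linarith
    have d3 := mul_le_mul_of_nonneg_right hkM hlam0
    have d4 := mul_le_mul_of_nonneg_left hupp hkpos.le
    have hL0 : 0 ≤ L := by linarith
    have d5 := mul_le_mul_of_nonneg_right hj₀u hL0
    have hkC : (k : ℝ) ≤ C ^ 3 := by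
      have : (k : ℝ) ≤ C := by rw [hkr]; linarith
      have : 0 ≤ C ^ 2 := by positivity
      linarith
    have d6 := mul_le_mul_of_nonneg_right hkC hL0
    have d7 : 0 ≤ C ^ 3 * L := by positivity
    linarith
  · have : Finite S := hSfin
    have : Nontrivial S := by
      rw [Set.nontrivial_coe_sort, ← Set.one_lt_ncard_iff_nontrivial]
      have : (1 : ℝ) < S.ncard := by linarith
      exact_mod_cast this
    exact hred.injective hh hi hδ
end
end

section
/- Let δ > 0, κ ≥ δ and N > 0, and let G be a group acting by isometries and (κ,N)-acylindrically on a δ-hyperbolic geodesic metric space X. Let U ⊆ G be a finite symmetric subset containing the identity such that the subgroup generated by U has unbounded orbits in X. Let L ≥ L(U) and let a be a real number with 0 < a < L. Then there exists an integer n ≥ 1 such that a < L(U^n) ≤ 2L. -/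
/-!
The set `U` contains `1`, so the powers `U ^ n` increase and `U ^ (n + 1) ⊆ U ^ n * U ^ n` for
`n ≥ 1`; hence `L(U ^ (n + 1)) ≤ 2 L(U ^ n)`. If some power has energy above `a`, the first such
power with positive exponent is either `U` itself or has energy at most `2 L`. It therefore
suffices to show that the energies `L(U ^ n)` cannot all be at most `a`.

Suppose they are. For each `k`, apply a circumcentre argument to the sets `U ^ (k * m) • x`, where
`x` is moved by a bounded amount under a much larger power of `U`. Their circumradii increase with
`m` and are bounded, so at some step the radius grows by less than `δ`; an almost-circumcentre of
that step is moved at most `6 δ` by `U ^ k` (`exists_small_displacement`). This yields points `y k`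
with `U ^ k` moving `y k` by at most `100 δ`. For fixed `j`, either `y k` is within `κ` of `y j`
for every `k ≥ j`, so that the orbit of `y j` is bounded, or some `y k` is at distance at least
`κ` from `y j`, and acylindricity gives `|U ^ j| ≤ N` (`ncard_pow_le`). If the latter holds for all
`j`, the increasing sequence `U ^ j` is eventually constant and the generated subgroup is finite.
-/

open Pointwise Filter

noncomputable section

universe u v

/-- The midpoint `p` of a geodesic from `c` to `c'`: a point within `R` of both ends is, as in a
tree but up to `2 δ`, within `R - d(c, c') / 2` of `p`. -/
lemma exists_midpoint {X : Type*} [MetricSpace X] {δ : ℝ} (hX : IsDeltaHyperbolic X δ)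
    (hgeo : IsGeodesicSpace X) (c c' : X) :
    ∃ p : X, ∀ s R, dist c s ≤ R → dist c' s ≤ R →
      dist p s ≤ R - dist c c' / 2 + 2 * δ := by
  obtain ⟨f, hf0, hf1, hf⟩ := hgeo c c'
  have hD : 0 ≤ dist c c' := dist_nonneg
  have h1 := hf 0 ⟨le_rfl, hD⟩ (dist c c' / 2) ⟨by linarith, by linarith⟩
  have h2 := hf (dist c c' / 2) ⟨by linarith, by linarith⟩ (dist c c') ⟨hD, le_rfl⟩
  rw [hf0, zero_sub, abs_neg, abs_of_nonneg (by linarith)] at h1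
  rw [hf1, abs_sub_comm, abs_of_nonneg (by linarith)] at h2
  refine ⟨f (dist c c' / 2), fun s R hc hc' => ?_⟩
  have h := hX c s c' (f (dist c c' / 2))
  unfold gromov at h
  rw [dist_comm c' (f _), dist_comm s (f _), dist_comm s c'] at h
  rcases min_choice ((dist c (f (dist c c' / 2)) + dist (f (dist c c' / 2)) s - dist c s) / 2)
    ((dist (f (dist c c' / 2)) s + dist (f (dist c c' / 2)) c' - dist c' s) / 2) with e | e <;>
  · rw [e] at h
    linarith

lemma pow_subset_pow_of_le {G : Type*} [Group G] {U : Set G} (h1 : (1 : G) ∈ U) {m n : ℕ}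
    (h : m ≤ n) : U ^ m ⊆ U ^ n :=
  Set.pow_subset_pow_right h1 h

lemma finite_pow_s3 {G : Type*} [Group G] {U : Set G} (hU : U.Finite) (n : ℕ) : (U ^ n).Finite := by
  induction n with
  | zero => simp
  | succ n ih => rw [pow_succ]; exact ih.mul hU

lemma inv_pow_eq {G : Type*} [Group G] {U : Set G} (hU : U⁻¹ = U) (n : ℕ) :
    (U ^ n)⁻¹ = U ^ n := by
  rw [← inv_pow, hU]

lemma exists_mem_pow_of_mem_closure {G : Type*} [Group G] {U : Set G} (hU : U⁻¹ = U)
    {g : G} (hg : g ∈ Subgroup.closure U) : ∃ n : ℕ, g ∈ U ^ n := by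
  induction hg using Subgroup.closure_induction with
  | mem x hx => exact ⟨1, by simpa using hx⟩
  | one => exact ⟨0, by simp⟩
  | mul x y _ _ hx hy =>
    obtain ⟨m, hm⟩ := hx
    obtain ⟨n, hn⟩ := hy
    exact ⟨m + n, by rw [pow_add]; exact Set.mul_mem_mul hm hn⟩
  | inv x _ hx =>
    obtain ⟨n, hn⟩ := hx
    exact ⟨n, by rw [← inv_pow_eq hU n]; simpa using hn⟩

lemma dist_smul_le_energyAt {G X : Type*} [Group G] [MetricSpace X] [MulAction G X]
    {V : Set G} (hV : V.Finite) (x : X) {g : G} (hg : g ∈ V) :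
    dist (g • x) x ≤ energyAt V x :=
  le_csSup (hV.image _).bddAbove ⟨g, hg, rfl⟩

lemma energy_le_energyAt {G X : Type*} [Group G] [MetricSpace X] [MulAction G X]
    (V : Set G) (x : X) : energy X V ≤ energyAt V x := by
  refine csInf_le ⟨0, ?_⟩ ⟨x, rfl⟩
  rintro _ ⟨y, rfl⟩
  apply Real.sSup_nonneg
  rintro _ ⟨g, _, rfl⟩
  exact dist_nonneg

lemma exists_energyAt_lt_s3 {G X : Type*} [Group G] [MetricSpace X] [MulAction G X] [Nonempty X]
    {V : Set G} {b : ℝ} (h : energy X V < b) : ∃ x : X, energyAt V x < b := by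
  obtain ⟨_, ⟨x, rfl⟩, hx⟩ := exists_lt_of_csInf_lt (Set.range_nonempty _) h
  exact ⟨x, hx⟩

/-- Circumcentre argument: if every power of `U` moves some point by at most `b`, then every power
of `U` moves some point by at most `6 δ`. -/
lemma exists_small_displacement {G X : Type*} [Group G] [MetricSpace X] [MulAction G X]
    {δ : ℝ} (hδ : 0 < δ) (hX : IsDeltaHyperbolic X δ) (hgeo : IsGeodesicSpace X)
    (hiso : IsometricAction G X) {U : Set G} (h1 : (1 : G) ∈ U) {b : ℝ}
    (hb : ∀ n : ℕ, ∃ x : X, ∀ g ∈ U ^ n, dist (g • x) x ≤ b) (k : ℕ) :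
    ∃ y : X, ∀ g ∈ U ^ k, dist (g • y) y ≤ 6 * δ := by
  obtain ⟨M, hM⟩ := exists_nat_gt (b / δ)
  rw [div_lt_iff₀ hδ] at hM
  obtain ⟨x, hx⟩ := hb (k * M)
  -- Some step `m` has `U ^ (k * (m + 1)) • x` in a ball of radius `R`,
  -- but `U ^ (k * m) • x` in no ball of radius `R - δ`.
  obtain ⟨m, R, ⟨c, hc⟩, hR⟩ : ∃ (m : ℕ) (R : ℝ),
      (∃ p : X, ∀ s ∈ U ^ (k * (m + 1)), dist p (s • x) ≤ R) ∧
      ¬ ∃ p : X, ∀ s ∈ U ^ (k * m), dist p (s • x) ≤ R - δ := by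
    by_contra! hcon
    have key : ∀ (m : ℕ) (R : ℝ), (∃ p : X, ∀ s ∈ U ^ (k * m), dist p (s • x) ≤ R) →
        0 ≤ R - m * δ := by
      intro m
      induction m with
      | zero =>
        rintro R ⟨p, hp⟩
        have := hp 1 (by simp)
        have := dist_nonneg.trans this
        simpa using this
      | succ m ih =>
        intro R h
        have := ih _ (hcon m R h)
        push_cast
        linarith
    have := key M b ⟨x, fun s hs => by rw [dist_comm]; exact hx s hs⟩
    linarith
  refine ⟨c, fun g hg => ?_⟩
  obtain ⟨p, hp⟩ := exists_midpoint hX hgeo c (g⁻¹ • c)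
  by_contra! hlt
  have e : dist c (g⁻¹ • c) = dist (g • c) c := by
    rw [← (hiso g).dist_eq c (g⁻¹ • c), smul_inv_smul]
  apply hR
  refine ⟨p, fun s hs => ?_⟩
  have hcs : dist c (s • x) ≤ R :=
    hc s (pow_subset_pow_of_le h1 (Nat.mul_le_mul_left k m.le_succ) hs)
  have h2 : dist (g⁻¹ • c) (s • x) ≤ R := by
    rw [← (hiso g).dist_eq (g⁻¹ • c) (s • x)]
    simp only [← mul_smul, mul_inv_cancel, one_smul]
    exact hc _ (by rw [mul_add, mul_one, add_comm, pow_add]; exact Set.mul_mem_mul hg hs)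
  have := hp (s • x) R hcs h2
  rw [e] at this
  linarith

/-- Since orbits are unbounded, the points `y k` with `k ≥ j` cannot all stay within `κ` of `y j`;
a distant `y k` is, like `y j`, barely moved by `U ^ j`, so acylindricity bounds the size of
`U ^ j`. -/
lemma ncard_pow_le {G X : Type*} [Group G] [MetricSpace X] [MulAction G X]
    {δ κ N : ℝ} (hiso : IsometricAction G X)
    (hacyl : AcylindricalAction G X δ κ N) {U : Set G} (h1 : (1 : G) ∈ U)
    {y : ℕ → X} (hy : ∀ k, ∀ g ∈ U ^ k, dist (g • y k) (y k) ≤ 100 * δ)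
    (hunb : ∀ (x : X) (C : ℝ), ∃ n, ∃ g ∈ U ^ n, C < dist (g • x) x) (j : ℕ) :
    ((U ^ j).ncard : ℝ) ≤ N := by
  obtain ⟨k, hjk, hk⟩ : ∃ k, j ≤ k ∧ κ ≤ dist (y j) (y k) := by
    by_contra! hcon
    obtain ⟨n, g, hg, hlt⟩ := hunb (y j) (2 * κ + 100 * δ)
    have hg' : g ∈ U ^ (max j n) := pow_subset_pow_of_le h1 (le_max_right _ _) hg
    have hd := hcon (max j n) (le_max_left _ _)
    have t1 := hy _ g hg'
    have t2 := dist_triangle4 (g • y j) (g • y (max j n)) (y (max j n)) (y j)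
    have t3 : dist (g • y j) (g • y (max j n)) = dist (y j) (y (max j n)) := (hiso g).dist_eq _ _
    rw [t3, dist_comm (y (max j n)) (y j)] at t2
    linarith
  obtain ⟨hfin, hcard⟩ := hacyl _ _ hk
  refine le_trans ?_ hcard
  have hsub : U ^ j ⊆
      {g : G | dist (g • y j) (y j) ≤ 100 * δ ∧ dist (g • y k) (y k) ≤ 100 * δ} :=
    fun g hg => ⟨hy j g hg, hy k g (pow_subset_pow_of_le h1 hjk hg)⟩
  exact_mod_cast Set.ncard_le_ncard hsub hfin

/-- Under an acylindrical action, the energies of the powers of `U` are unbounded as soon as `U` is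
not contained in an elliptic subgroup. -/
lemma exists_lt_energy_pow {G X : Type*} [Group G] [MetricSpace X] [MulAction G X]
    {δ κ N : ℝ} (hδ : 0 < δ) (hX : IsDeltaHyperbolic X δ) (hgeo : IsGeodesicSpace X)
    (hiso : IsometricAction G X) (hacyl : AcylindricalAction G X δ κ N)
    {U : Set G} (hU : U.Finite) (hinv : U⁻¹ = U) (h1 : (1 : G) ∈ U) {x₀ : X}
    (hunb : ¬ Bornology.IsBounded ((fun g : G => g • x₀) '' (Subgroup.closure U : Set G)))
    (a : ℝ) : ∃ n : ℕ, a < energy X (U ^ n) := by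
  by_contra! hcon
  have : Nonempty X := ⟨x₀⟩
  have hb : ∀ n : ℕ, ∃ x : X, ∀ g ∈ U ^ n, dist (g • x) x ≤ a + 1 := by
    intro n
    obtain ⟨x, hx⟩ := exists_energyAt_lt_s3 (show energy X (U ^ n) < a + 1 by linarith [hcon n])
    exact ⟨x, fun g hg => (dist_smul_le_energyAt (finite_pow_s3 hU n) x hg).trans hx.le⟩
  choose y hy using exists_small_displacement hδ hX hgeo hiso h1 hb
  have hunb' : ∀ (x : X) (C : ℝ), ∃ n, ∃ g ∈ U ^ n, C < dist (g • x) x := by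
    intro x C
    by_contra! hC
    refine hunb ((Metric.isBounded_closedBall (x := x₀) (r := C + 2 * dist x x₀)).subset ?_)
    rintro _ ⟨g, hg, rfl⟩
    obtain ⟨n, hn⟩ := exists_mem_pow_of_mem_closure hinv hg
    have t1 := hC n g hn
    have t2 := dist_triangle4 (g • x₀) (g • x) x x₀
    have t3 : dist (g • x₀) (g • x) = dist x₀ x := (hiso g).dist_eq _ _
    rw [t3, dist_comm x₀ x] at t2
    simp only [Metric.mem_closedBall]
    linarith
  have hcard := ncard_pow_le hiso hacyl h1
    (fun k g hg => (hy k g hg).trans (by linarith)) hunb'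
  -- A power of maximal size contains all the others.
  obtain ⟨j, hj⟩ : ∃ j, ∀ k, (U ^ k).ncard ≤ (U ^ j).ncard := by
    have hbdd : BddAbove (Set.range fun k => (U ^ k).ncard) := by
      refine ⟨⌊N⌋₊, ?_⟩
      rintro _ ⟨k, rfl⟩
      exact Nat.le_floor (hcard k)
    obtain ⟨j, hj⟩ := Nat.sSup_mem (Set.range_nonempty _) hbdd
    exact ⟨j, fun k => by
      have := le_csSup hbdd ⟨k, rfl⟩
      rw [← hj] at this
      exact this⟩
  refine hunb (((finite_pow_s3 hU j).image (fun g : G => g • x₀)).isBounded.subset ?_)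
  apply Set.image_mono
  intro g hg
  obtain ⟨n, hn⟩ := exists_mem_pow_of_mem_closure hinv hg
  have heq : U ^ j = U ^ (max j n) := Set.eq_of_subset_of_ncard_le
    (pow_subset_pow_of_le h1 (le_max_left _ _)) (hj _) (finite_pow_s3 hU _)
  rw [heq]
  exact pow_subset_pow_of_le h1 (le_max_right _ _) hn

/-- powers of a set that is not contained in an elliptic subgroup
reach any prescribed energy level below `L`. -/
theorem power_energy_between :
    ∀ (G : Type u) [Group G] (X : Type v) [MetricSpace X] [MulAction G X],
    ∀ δ κ N : ℝ, 0 < δ → δ ≤ κ → 0 < N →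
      IsDeltaHyperbolic X δ → IsGeodesicSpace X →
      IsometricAction G X → AcylindricalAction G X δ κ N →
      ∀ U : Set G, U.Finite → U⁻¹ = U → (1 : G) ∈ U →
        (∃ x : X, ¬ Bornology.IsBounded
          ((fun g : G => g • x) '' ↑(Subgroup.closure U))) →
        ∀ L a : ℝ, energy X U ≤ L → 0 < a → a < L →
          ∃ n : ℕ, 1 ≤ n ∧ a < energy X (U ^ n) ∧ energy X (U ^ n) ≤ 2 * L := by
  intro G _ X _ _ δ κ N hδ _ _ hX hgeo hiso hacyl U hU hinv h1 ⟨x₀, hunb⟩ L a hL ha haL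
  have : Nonempty X := ⟨x₀⟩
  have hex : ∃ n : ℕ, a < energy X (U ^ (n + 1)) := by
    obtain ⟨n, hn⟩ := exists_lt_energy_pow hδ hX hgeo hiso hacyl hU hinv h1 hunb a
    rcases n with _ | n
    · -- `U ^ 0 = {1}` has energy zero
      have h0 := energy_le_energyAt (U ^ 0) x₀
      simp only [pow_zero, energyAt, Set.image_one, one_smul, dist_self, csSup_singleton] at h0 hn
      linarith
    · exact ⟨n, hn⟩
  classical
  refine ⟨Nat.find hex + 1, by omega, Nat.find_spec hex, ?_⟩
  rcases h : Nat.find hex with _ | m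
  · rw [zero_add, pow_one]
    linarith
  · have hm : energy X (U ^ (m + 1)) ≤ a := not_lt.1 (Nat.find_min hex (by omega))
    obtain ⟨x, hx⟩ := exists_energyAt_lt_s3 (hm.trans_lt haL)
    refine (energy_le_energyAt _ x).trans (csSup_le ?_ ?_)
    · exact ⟨_, 1, Set.one_mem_pow h1, rfl⟩
    · rintro _ ⟨g, hg, rfl⟩
      rw [pow_succ] at hg
      obtain ⟨p, hp, q, hq, rfl⟩ := hg
      have hq' : q ∈ U ^ (m + 1) :=
        pow_subset_pow_of_le h1 (Nat.le_add_left 1 m) (by simpa using hq)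
      have d1 := dist_smul_le_energyAt (finite_pow_s3 hU _) x hp
      have d2 := dist_smul_le_energyAt (finite_pow_s3 hU _) x hq'
      have d3 := dist_triangle (p • q • x) (p • x) x
      have d4 : dist (p • q • x) (p • x) = dist (q • x) x := (hiso p).dist_eq _ _
      simp only [mul_smul]
      linarith
end
end
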